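/- arXiv:2203.08375 — 2 statements merged into one kernel-verified Lean document; each statement's English description precedes it below -/
import Mathlib

section
/- Let d∈(0,1] and Ω̂^d=ℝ×(0,d). Let ψ∈C²(Ω̂^d) be Lipschitz continuous on the closure of Ω̂^d, with 0≤ψ≤Q, and suppose Δψ(x)=f(ψ(x)) for all x∈Ω̂^d (where Δψ=∂²ψ/∂x₁²+∂²ψ/∂x₂²), ψ(x₁,0)=0 and ψ(x₁,d)=Q for all x₁∈ℝ, and ∂_{x₂}ψ≥0 in Ω̂^d. Then ψ is independent of x₁: there is a function of one variable g such that ψ(x₁,x₂)=g(x₂) for all (x₁,x₂)∈Ω̂^d. -/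
open Real Set MeasureTheory

noncomputable section

/-- Partial derivative in the `x₁` direction. -/
def pd1 (φ : ℝ × ℝ → ℝ) (x : ℝ × ℝ) : ℝ := fderiv ℝ φ x (1, 0)

/-- Partial derivative in the `x₂` direction. -/
def pd2 (φ : ℝ × ℝ → ℝ) (x : ℝ × ℝ) : ℝ := fderiv ℝ φ x (0, 1)

/-- The Laplacian `Δφ = ∂²φ/∂x₁² + ∂²φ/∂x₂²`. -/
def lap (φ : ℝ × ℝ → ℝ) (x : ℝ × ℝ) : ℝ := pd1 (pd1 φ) x + pd2 (pd2 φ) x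

/-!
Let `F' = f` with `F ≥ 0`, and let `H(s) = travelTime F e s` be the time which the one-dimensional
profile of energy `e` takes to climb from `0` to `s`. Multiply the `x₂`-column
`(-∂₁ψ ∂₂ψ, (|∂₁ψ|² - |∂₂ψ|²) / 2 + e + F(ψ))` of the stress-energy tensor, which is divergence
free, by the weight `H(ψ) - x₂`. With `N = √(2 (e + F(ψ)))`, the product has divergence
`-(1 + ∂₂ψ / N) / 2 * (|∂₁ψ|² + (N - ∂₂ψ)²) ≤ -|∂₁ψ|² / 2`.

The weight vanishes on the bottom of the strip and equals `H(Q) - d` on the top, and `H(Q)` can be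
brought arbitrarily close to `d` by the choice of `e`: it tends to `0` as `e → ∞`, while for the
cubic profile `Q (3t² - 2t³)`, which starts from rest, it tends to `1 ≥ d` as `e → 0`. Hence
`∫_{[a, b] × [0, d]} |∂₁ψ|²` is bounded by the integrals of `|∂₁ψ|` over the two vertical sides. By
Cauchy-Schwarz, `G(R) = ∫_{[-R, R] × [0, d]} |∂₁ψ|²` satisfies `G² ≤ C G'`, and this forces `G = 0`
because a positive solution would blow up at a finite `R`.
-/

lemma nonpos_of_sq_le_mul_deriv {G G' : ℝ → ℝ} {a C : ℝ} (hC : 0 < C)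
    (hG : ∀ x ∈ Ici a, HasDerivAt G (G' x) x) (h : ∀ x ∈ Ici a, G x ^ 2 ≤ C * G' x) :
    G a ≤ 0 := by
  by_contra! ha
  have hG' : ∀ x ∈ Ici a, 0 ≤ G' x := fun x hx =>
    nonneg_of_mul_nonneg_right ((sq_nonneg _).trans (h x hx)) hC
  have hcont : ContinuousOn G (Ici a) := fun x hx => (hG x hx).continuousAt.continuousWithinAt
  have hmono : MonotoneOn G (Ici a) :=
    monotoneOn_of_hasDerivWithinAt_nonneg (convex_Ici a) hcont
      (fun x hx => (hG x (interior_subset hx)).hasDerivWithinAt)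
      fun x hx => hG' x (interior_subset hx)
  have hpos : ∀ x ∈ Ici a, 0 < G x := fun x hx => ha.trans_le (hmono self_mem_Ici hx hx)
  have hφ : ∀ x ∈ Ici a, HasDerivAt (fun x => (G x)⁻¹ + x / C) (-G' x / G x ^ 2 + 1 / C) x :=
    fun x hx => ((hG x hx).fun_inv (hpos x hx).ne').add ((hasDerivAt_id x).div_const C)
  have hanti : AntitoneOn (fun x => (G x)⁻¹ + x / C) (Ici a) := by
    refine antitoneOn_of_hasDerivWithinAt_nonpos (convex_Ici a)
      (fun x hx => (hφ x hx).continuousAt.continuousWithinAt)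
      (fun x hx => (hφ x (interior_subset hx)).hasDerivWithinAt) fun x hx => ?_
    have hx := interior_subset hx
    have hle : 1 / C ≤ G' x / G x ^ 2 := by
      rw [div_le_div_iff₀ hC (pow_pos (hpos x hx) 2)]
      linarith [h x hx]
    rw [neg_div]
    linarith
  -- `(G x)⁻¹` would have dropped to `0` by the time `x = a + C / G a`.
  have hb : a ≤ a + C * (G a)⁻¹ := by
    have := inv_pos.2 ha
    nlinarith
  have hle := hanti self_mem_Ici hb hb
  have hinv := inv_pos.2 (hpos _ hb)
  simp only [add_div, mul_div_cancel_left₀ _ hC.ne'] at hle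
  linarith

lemma sq_intervalIntegral_le {g : ℝ → ℝ} {a b : ℝ} (hab : a < b)
    (hg : IntervalIntegrable g volume a b)
    (hg2 : IntervalIntegrable (fun x => g x ^ 2) volume a b) :
    (∫ x in a..b, g x) ^ 2 ≤ (b - a) * ∫ x in a..b, g x ^ 2 := by
  have hba := sub_pos.2 hab
  have hJensen : (⨍ x in a..b, g x) ^ 2 ≤ ⨍ x in a..b, g x ^ 2 := by
    rw [uIoc_of_le hab.le]
    exact (even_two.convexOn_pow (𝕜 := ℝ)).map_set_average_le (by fun_prop) isClosed_univ
      (by simpa using hab) (by simp) (by simp) hg.1 hg2.1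
  simp only [interval_average_eq, smul_eq_mul] at hJensen
  field_simp at hJensen
  linarith

lemma hasDerivWithinAt_intervalIntegral {g : ℝ → ℝ} {a b s : ℝ} (hg : ContinuousOn g (Icc a b))
    (hs : s ∈ Icc a b) :
    HasDerivWithinAt (fun u => ∫ x in a..u, g x) (g s) (Icc a b) s := by
  have : Fact (s ∈ Icc a b) := ⟨hs⟩
  exact intervalIntegral.integral_hasDerivWithinAt_right
    ((hg.mono (Icc_subset_Icc_right hs.2)).intervalIntegrable_of_Icc hs.1)
    (hg.stronglyMeasurableAtFilter_nhdsWithin measurableSet_Icc s) (hg s hs)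

lemma hasDerivAt_intervalIntegral_neg_self {g : ℝ → ℝ} (hg : Continuous g) (R : ℝ) :
    HasDerivAt (fun r => ∫ x in -r..r, g x) (g R + g (-R)) R := by
  have hsub : (fun r => ∫ x in -r..r, g x) =
      fun r => (∫ x in (0 : ℝ)..r, g x) - ∫ x in (0 : ℝ)..-r, g x := by
    ext r
    exact (intervalIntegral.integral_interval_sub_left (hg.intervalIntegrable _ _)
      (hg.intervalIntegrable _ _)).symm
  have hprim : ∀ u, HasDerivAt (fun u => ∫ x in (0 : ℝ)..u, g x) (g u) u :=
    fun u => (hg.integral_hasStrictDerivAt 0 u).hasDerivAt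
  rw [hsub, ← sub_neg_eq_add, ← mul_neg_one (g (-R))]
  exact (hprim R).sub ((hprim (-R)).comp R (hasDerivAt_neg R))

lemma continuousOn_image_of_leftInvOn {X Y : Type*} [TopologicalSpace X] [TopologicalSpace Y]
    [T2Space Y] {f : X → Y} {g : Y → X} {s : Set X} (hs : IsCompact s) (hf : ContinuousOn f s)
    (hgf : LeftInvOn g f s) : ContinuousOn g (f '' s) := by
  refine continuousOn_iff_isClosed.2 fun t ht => ⟨f '' (s ∩ t), ?_, ?_⟩
  · exact ((hs.inter_right ht).image_of_continuousOn (hf.mono inter_subset_left)).isClosed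
  · ext y
    constructor
    · rintro ⟨hy, x, hx, rfl⟩
      rw [mem_preimage, hgf hx] at hy
      exact ⟨mem_image_of_mem f ⟨hx, hy⟩, mem_image_of_mem f hx⟩
    · rintro ⟨⟨x, ⟨hx, hxt⟩, rfl⟩, hy⟩
      exact ⟨by rwa [mem_preimage, hgf hx], hy⟩

lemma intervalIntegral_le_add_of_abs_le {g : ℝ → ℝ} {d δ M : ℝ} (hδ : 0 ≤ δ) (hδd : δ ≤ d / 2)
    (hg : IntervalIntegrable g volume 0 d) (hM : ∀ y ∈ Ioo 0 d, |g y| ≤ M) :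
    ∫ y in (0 : ℝ)..d, g y ≤ (∫ y in δ..d - δ, g y) + 2 * M * δ := by
  have hsub : ∀ u v, 0 ≤ u → u ≤ v → v ≤ d → IntervalIntegrable g volume u v :=
    fun u v hu huv hv => hg.mono_set (by
      rw [uIcc_of_le huv, uIcc_of_le (hu.trans (huv.trans hv))]
      exact Icc_subset_Icc hu hv)
  have hle : ∀ u v, 0 ≤ u → u ≤ v → v ≤ d → ∫ y in u..v, g y ≤ M * (v - u) := by
    intro u v hu huv hv
    refine (intervalIntegral.integral_mono_on_of_le_Ioo huv (hsub u v hu huv hv)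
      intervalIntegrable_const fun y hy => le_of_abs_le
        (hM y ⟨by linarith [hy.1], by linarith [hy.2]⟩)).trans_eq ?_
    rw [intervalIntegral.integral_const, smul_eq_mul, mul_comm]
  have h₁ := hsub 0 δ le_rfl hδ (by linarith)
  have h₂ := hsub δ (d - δ) hδ (by linarith) (by linarith)
  have h₃ := hsub (d - δ) d (by linarith) (by linarith) le_rfl
  rw [← intervalIntegral.integral_add_adjacent_intervals (h₁.trans h₂) h₃,
    ← intervalIntegral.integral_add_adjacent_intervals h₁ h₂]
  linarith [hle 0 δ le_rfl hδ (by linarith), hle (d - δ) d (by linarith) (by linarith) le_rfl]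

/-- The time the one-dimensional profile `u' = √(2 (e + F u))` of energy `e` in the potential `F`
takes to travel from `0` to `s`. -/
def travelTime (F : ℝ → ℝ) (e s : ℝ) : ℝ := ∫ r in (0 : ℝ)..s, (√(2 * (e + F r)))⁻¹

section TravelTime

variable {F : ℝ → ℝ} {Q e r s d : ℝ}

lemma continuousOn_inv_sqrt_two_mul_add (hF : ContinuousOn F (Icc 0 Q))
    (hF0 : ∀ s ∈ Icc 0 Q, 0 ≤ F s) (he : 0 < e) :
    ContinuousOn (fun s => (√(2 * (e + F s)))⁻¹) (Icc 0 Q) := by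
  refine ContinuousOn.inv₀ (by fun_prop) fun s hs => ?_
  have := hF0 s hs
  positivity

lemma hasDerivWithinAt_travelTime (hF : ContinuousOn F (Icc 0 Q)) (hF0 : ∀ s ∈ Icc 0 Q, 0 ≤ F s)
    (he : 0 < e) (hs : s ∈ Icc 0 Q) :
    HasDerivWithinAt (travelTime F e) (√(2 * (e + F s)))⁻¹ (Icc 0 Q) s :=
  hasDerivWithinAt_intervalIntegral (continuousOn_inv_sqrt_two_mul_add hF hF0 he) hs

lemma travelTime_zero (F : ℝ → ℝ) (e : ℝ) : travelTime F e 0 = 0 :=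
  intervalIntegral.integral_same

lemma travelTime_sub_mem_Icc (hF : ContinuousOn F (Icc 0 Q)) (hF0 : ∀ s ∈ Icc 0 Q, 0 ≤ F s)
    (he : 0 < e) (hr : 0 ≤ r) (hrs : r ≤ s) (hs : s ≤ Q) :
    travelTime F e s - travelTime F e r ∈ Icc 0 ((√(2 * e))⁻¹ * (s - r)) := by
  have hint : ∀ u v, 0 ≤ u → u ≤ v → v ≤ Q →
      IntervalIntegrable (fun r => (√(2 * (e + F r)))⁻¹) volume u v := fun u v hu huv hv =>
    ((continuousOn_inv_sqrt_two_mul_add hF hF0 he).mono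
      (Icc_subset_Icc hu hv)).intervalIntegrable_of_Icc huv
  have hle : ∫ x in r..s, (√(2 * (e + F x)))⁻¹ ≤ ∫ _ in r..s, (√(2 * e))⁻¹ := by
    refine intervalIntegral.integral_mono_on hrs (hint r s hr hrs hs) intervalIntegrable_const
      fun x hx => ?_
    have := hF0 x ⟨hr.trans hx.1, hx.2.trans hs⟩
    gcongr
    linarith
  rw [travelTime, travelTime, intervalIntegral.integral_interval_sub_left
    (hint 0 s le_rfl (hr.trans hrs) hs) (hint 0 r le_rfl hr (hrs.trans hs))]
  refine ⟨intervalIntegral.integral_nonneg hrs fun x _ => by positivity, hle.trans_eq ?_⟩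
  rw [intervalIntegral.integral_const, smul_eq_mul, mul_comm]

lemma travelTime_le (hF : ContinuousOn F (Icc 0 Q)) (hF0 : ∀ s ∈ Icc 0 Q, 0 ≤ F s)
    (he : 0 < e) (hQ : 0 ≤ Q) : travelTime F e Q ≤ (√(2 * e))⁻¹ * Q := by
  simpa [travelTime_zero] using (travelTime_sub_mem_Icc hF hF0 he le_rfl hQ le_rfl).2

lemma energy_le_of_le_travelTime (hF : ContinuousOn F (Icc 0 Q)) (hF0 : ∀ s ∈ Icc 0 Q, 0 ≤ F s)
    (he : 0 < e) (hQ : 0 ≤ Q) (hd : 0 < d) (h : d ≤ travelTime F e Q) : e ≤ (Q / d) ^ 2 / 2 := by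
  have hsqrt : √(2 * e) ≤ Q / d := by
    rw [le_div_iff₀ hd, mul_comm, ← le_div_iff₀ (by positivity), div_eq_inv_mul]
    exact h.trans (travelTime_le hF hF0 he hQ)
  have := (Real.sqrt_le_left (by positivity)).1 hsqrt
  linarith

lemma continuousOn_travelTime_energy (hF : ContinuousOn F (Icc 0 Q))
    (hF0 : ∀ s ∈ Icc 0 Q, 0 ≤ F s) (hQ : 0 ≤ Q) :
    ContinuousOn (fun e => travelTime F e Q) (Ioi 0) := by
  intro e he
  have he : 0 < e := he
  refine ContinuousAt.continuousWithinAt <|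
    intervalIntegral.continuousAt_of_dominated_interval (bound := fun _ => (√e)⁻¹) ?_ ?_
      intervalIntegrable_const ?_
  · filter_upwards [lt_mem_nhds he] with e' he'
    rw [uIoc_of_le hQ]
    exact ((continuousOn_inv_sqrt_two_mul_add hF hF0 he').intervalIntegrable_of_Icc
      hQ).1.aestronglyMeasurable
  · filter_upwards [lt_mem_nhds (half_lt_self he)] with e' he'
    refine .of_forall fun s hs => ?_
    rw [uIoc_of_le hQ] at hs
    have := hF0 s (Ioc_subset_Icc_self hs)
    rw [Real.norm_of_nonneg (by positivity)]
    gcongr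
    linarith
  · refine .of_forall fun s hs => ?_
    rw [uIoc_of_le hQ] at hs
    have := hF0 s (Ioc_subset_Icc_self hs)
    exact ContinuousAt.inv₀ (by fun_prop) (by positivity)

lemma exists_travelTime_eq (hF : ContinuousOn F (Icc 0 Q)) (hF0 : ∀ s ∈ Icc 0 Q, 0 ≤ F s)
    (hQ : 0 ≤ Q) (hd : 0 < d) (he : 0 < e) (h : d ≤ travelTime F e Q) :
    ∃ e > 0, travelTime F e Q = d := by
  set e' := max e ((Q / d) ^ 2)
  have hpos : 0 < e' := he.trans_le (le_max_left _ _)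
  have hle : travelTime F e' Q ≤ d := by
    have hsqrt : Q / d ≤ √(2 * e') :=
      Real.le_sqrt_of_sq_le (by linarith [le_max_right e ((Q / d) ^ 2)])
    refine (travelTime_le hF hF0 hpos hQ).trans ?_
    rw [inv_mul_le_iff₀ (by positivity)]
    exact (div_le_iff₀ hd).1 hsqrt
  obtain ⟨e'', he'', heq⟩ := intermediate_value_Icc' (le_max_left e _)
    ((continuousOn_travelTime_energy hF hF0 hQ).mono fun x hx => he.trans_le hx.1) ⟨hle, h⟩
  exact ⟨e'', he.trans_le he''.1, heq⟩

end TravelTime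

/-- `u : [0, T] → [0, Q]` is an increasing solution, with velocity `w`, of the one-dimensional
equation `u'' = f(u)` that starts from rest at `0` and arrives at `Q` at time `T`. -/
structure IsProfileFromRest (f u w : ℝ → ℝ) (Q T : ℝ) : Prop where
  hasDerivWithinAt : ∀ t ∈ Icc 0 T, HasDerivWithinAt u (w t) (Icc 0 T) t
  hasDerivWithinAt_velocity : ∀ t ∈ Icc 0 T, HasDerivWithinAt w (f (u t)) (Icc 0 T) t
  velocity_pos : ∀ t ∈ Ioo 0 T, 0 < w t
  start : u 0 = 0
  velocity_start : w 0 = 0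
  arrival : u T = Q

namespace IsProfileFromRest

variable {f g u w : ℝ → ℝ} {Q T t e : ℝ}

lemma continuousOn (h : IsProfileFromRest f u w Q T) : ContinuousOn u (Icc 0 T) :=
  fun t ht => (h.hasDerivWithinAt t ht).continuousWithinAt

lemma continuousOn_velocity (h : IsProfileFromRest f u w Q T) : ContinuousOn w (Icc 0 T) :=
  fun t ht => (h.hasDerivWithinAt_velocity t ht).continuousWithinAt

lemma image_Icc (h : IsProfileFromRest f u w Q T) (hT : 0 ≤ T) : u '' Icc 0 T = Icc 0 Q := by
  have hmono : MonotoneOn u (Icc 0 T) :=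
    monotoneOn_of_hasDerivWithinAt_nonneg (convex_Icc 0 T) h.continuousOn
      (fun t ht => (h.hasDerivWithinAt t (interior_subset ht)).mono interior_subset)
      fun t ht => (h.velocity_pos t (interior_Icc (a := (0 : ℝ)) ▸ ht)).le
  rw [h.continuousOn.image_Icc_of_monotoneOn hT hmono, h.start, h.arrival]

lemma integral_comp (h : IsProfileFromRest f u w Q T) (hg : ContinuousOn g (Icc 0 Q))
    (ht : t ∈ Icc 0 T) : ∫ s in (0 : ℝ)..u t, g s = ∫ τ in (0 : ℝ)..t, g (u τ) * w τ := by
  have hsub : uIcc 0 t ⊆ Icc 0 T := by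
    rw [uIcc_of_le ht.1]
    exact Icc_subset_Icc_right ht.2
  have hsubst : ∫ τ in (0 : ℝ)..t, (g ∘ u) τ * w τ = ∫ s in u 0..u t, g s := by
    refine intervalIntegral.integral_comp_mul_deriv'' (h.continuousOn.mono hsub)
      (fun τ hτ => ?_) (h.continuousOn_velocity.mono hsub) (hg.mono ?_)
    · rw [min_eq_left ht.1, max_eq_right ht.1] at hτ
      exact ((h.hasDerivWithinAt τ ⟨hτ.1.le, hτ.2.le.trans ht.2⟩).hasDerivAt
        (Icc_mem_nhds hτ.1 (hτ.2.trans_le ht.2))).hasDerivWithinAt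
    · rw [← h.image_Icc (ht.1.trans ht.2)]
      exact image_mono hsub
  rw [h.start] at hsubst
  exact hsubst.symm

lemma integral_eq_sq_velocity_div_two (h : IsProfileFromRest f u w Q T)
    (hf : ContinuousOn f (Icc 0 Q)) (ht : t ∈ Icc 0 T) :
    ∫ s in (0 : ℝ)..u t, f s = w t ^ 2 / 2 := by
  have hsub : Icc 0 t ⊆ Icc 0 T := Icc_subset_Icc_right ht.2
  have hderiv : ∀ τ ∈ Ioo 0 t, HasDerivAt (fun τ => w τ ^ 2 / 2) (f (u τ) * w τ) τ := by
    intro τ hτ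
    have hτT : τ ∈ Ioo 0 T := ⟨hτ.1, hτ.2.trans_le ht.2⟩
    refine ((((h.hasDerivWithinAt_velocity τ (Ioo_subset_Icc_self hτT)).hasDerivAt
      (Icc_mem_nhds hτT.1 hτT.2)).fun_pow 2).div_const 2).congr_deriv ?_
    push_cast
    ring
  have hfu : ContinuousOn (fun τ => f (u τ)) (Icc 0 T) :=
    hf.comp h.continuousOn (h.image_Icc (ht.1.trans ht.2) ▸ mapsTo_image u _)
  rw [h.integral_comp hf ht, intervalIntegral.integral_eq_sub_of_hasDerivAt_of_le ht.1
    (((h.continuousOn_velocity.pow 2).div_const 2).mono hsub) hderiv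
    (((hfu.mul h.continuousOn_velocity).mono hsub).intervalIntegrable_of_Icc ht.1)]
  simp [h.velocity_start]

lemma integral_nonneg (h : IsProfileFromRest f u w Q T) (hT : 0 ≤ T)
    (hf : ContinuousOn f (Icc 0 Q)) : ∀ s ∈ Icc 0 Q, 0 ≤ ∫ r in (0 : ℝ)..s, f r := by
  rw [← h.image_Icc hT]
  rintro _ ⟨t, ht, rfl⟩
  rw [h.integral_eq_sq_velocity_div_two hf ht]
  positivity

lemma travelTime_eq (h : IsProfileFromRest f u w Q T) (hT : 0 ≤ T)
    (hf : ContinuousOn f (Icc 0 Q)) (he : 0 < e) :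
    travelTime (fun s => ∫ r in (0 : ℝ)..s, f r) e Q =
      ∫ t in (0 : ℝ)..T, (√(2 * e + w t ^ 2))⁻¹ * w t := by
  have hF : ContinuousOn (fun s => ∫ r in (0 : ℝ)..s, f r) (Icc 0 Q) := fun s hs =>
    (hasDerivWithinAt_intervalIntegral hf hs).continuousWithinAt
  have hcomp := h.integral_comp
    (continuousOn_inv_sqrt_two_mul_add hF (h.integral_nonneg hT hf) he) (right_mem_Icc.2 hT)
  rw [h.arrival] at hcomp
  refine hcomp.trans (intervalIntegral.integral_congr fun t ht => ?_)
  rw [uIcc_of_le hT] at ht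
  simp only [h.integral_eq_sq_velocity_div_two hf ht]
  ring_nf

lemma tendsto_travelTime (h : IsProfileFromRest f u w Q T) (hT : 0 ≤ T)
    (hf : ContinuousOn f (Icc 0 Q)) :
    Filter.Tendsto (fun e => travelTime (fun s => ∫ r in (0 : ℝ)..s, f r) e Q)
      (nhdsWithin 0 (Ioi 0)) (nhds T) := by
  have hlim : Filter.Tendsto (fun e => ∫ t in (0 : ℝ)..T, (√(2 * e + w t ^ 2))⁻¹ * w t)
      (nhdsWithin 0 (Ioi 0)) (nhds (∫ _ in (0 : ℝ)..T, 1)) := by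
    simp only [intervalIntegral.integral_of_le hT, integral_Ioc_eq_integral_Ioo]
    refine tendsto_integral_filter_of_dominated_convergence (fun _ => 1) ?_ ?_
      (integrable_const 1) ?_
    · filter_upwards [self_mem_nhdsWithin] with e (he : 0 < e)
      have hw := h.continuousOn_velocity.mono Ioo_subset_Icc_self
      exact (ContinuousOn.mul (ContinuousOn.inv₀ (by fun_prop) fun t _ => by positivity)
        hw).aestronglyMeasurable measurableSet_Ioo
    · filter_upwards [self_mem_nhdsWithin] with e (he : 0 < e)
      refine (ae_restrict_iff' measurableSet_Ioo).2 <| .of_forall fun t ht => ?_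
      have := h.velocity_pos t ht
      rw [Real.norm_of_nonneg (by positivity), inv_mul_le_one₀ (by positivity)]
      exact Real.le_sqrt_of_sq_le (by linarith)
    · refine (ae_restrict_iff' measurableSet_Ioo).2 <| .of_forall fun t ht => ?_
      have hpos := h.velocity_pos t ht
      have hcont : ContinuousAt (fun e => (√(2 * e + w t ^ 2))⁻¹ * w t) 0 :=
        (ContinuousAt.inv₀ (by fun_prop) (by positivity)).mul continuousAt_const
      have hval : (√(2 * 0 + w t ^ 2))⁻¹ * w t = 1 := by
        rw [mul_zero, zero_add, Real.sqrt_sq hpos.le, inv_mul_cancel₀ hpos.ne']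
      exact hval ▸ hcont.tendsto.mono_left nhdsWithin_le_nhds
  rw [intervalIntegral.integral_const, sub_zero, smul_eq_mul, mul_one] at hlim
  refine hlim.congr' ?_
  filter_upwards [self_mem_nhdsWithin] with e he using (h.travelTime_eq hT hf he).symm

lemma exists_potential (h : IsProfileFromRest f u w Q T) (hT : 0 ≤ T)
    (hf : ContinuousOn f (Icc 0 Q)) :
    ∃ F : ℝ → ℝ, (∀ s ∈ Icc 0 Q, HasDerivWithinAt F (f s) (Icc 0 Q) s) ∧
      (∀ s ∈ Icc 0 Q, 0 ≤ F s) ∧ ∀ d < T, ∃ e > 0, d ≤ travelTime F e Q :=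
  ⟨_, fun _ hs => hasDerivWithinAt_intervalIntegral hf hs, h.integral_nonneg hT hf, fun _ hd =>
    (eventually_mem_nhdsWithin.and
      ((h.tendsto_travelTime hT hf).eventually_const_le hd)).exists⟩

end IsProfileFromRest

/-- The open horizontal strip `ℝ × (0, d)`. -/
def strip (d : ℝ) : Set (ℝ × ℝ) := Prod.snd ⁻¹' Ioo 0 d

lemma isOpen_strip (d : ℝ) : IsOpen (strip d) := isOpen_Ioo.preimage continuous_snd

section Slices

variable {p : ℝ × ℝ → ℝ} {d u v M C : ℝ}

lemma continuousOn_slice (hp : ContinuousOn p (strip d)) (x : ℝ) :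
    ContinuousOn (fun y => p (x, y)) (Ioo 0 d) :=
  hp.comp (by fun_prop) fun _ hy => hy

lemma intervalIntegrable_slice (hu : 0 ≤ u) (huv : u ≤ v) (hv : v ≤ d)
    (hp : ContinuousOn p (strip d)) (hM : ∀ x ∈ strip d, |p x| ≤ M) (x : ℝ) :
    IntervalIntegrable (fun y => p (x, y)) volume u v := by
  have hsub : Ioo u v ⊆ Ioo 0 d := Ioo_subset_Ioo hu hv
  rw [intervalIntegrable_iff_integrableOn_Ioo_of_le huv]
  exact .of_bound measure_Ioo_lt_top
    (((continuousOn_slice hp x).mono hsub).aestronglyMeasurable measurableSet_Ioo) M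
    ((ae_restrict_iff' measurableSet_Ioo).2 <| .of_forall fun y hy => hM (x, y) (hsub hy))

lemma continuous_intervalIntegral_slice (hu : 0 ≤ u) (huv : u ≤ v) (hv : v ≤ d)
    (hp : ContinuousOn p (strip d)) (hM : ∀ x ∈ strip d, |p x| ≤ M) :
    Continuous fun x => ∫ y in u..v, p (x, y) := by
  have hsub : Ioo u v ⊆ Ioo 0 d := Ioo_subset_Ioo hu hv
  simp only [intervalIntegral.integral_of_le huv, integral_Ioc_eq_integral_Ioo]
  refine continuous_of_dominated (bound := fun _ => M)
    (fun x => ((continuousOn_slice hp x).mono hsub).aestronglyMeasurable measurableSet_Ioo)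
    (fun x => (ae_restrict_iff' measurableSet_Ioo).2 <|
      .of_forall fun y hy => hM (x, y) (hsub hy))
    (integrable_const M) ((ae_restrict_iff' measurableSet_Ioo).2 <| .of_forall fun y hy => ?_)
  exact hp.comp_continuous (by fun_prop) fun _ => hsub hy

lemma eq_zero_of_integral_sq_nonpos (hd : 0 ≤ d) (hp : ContinuousOn p (strip d))
    (hM : ∀ x ∈ strip d, |p x| ≤ M)
    (h : ∀ R, 0 ≤ R → ∫ x in -R..R, ∫ y in (0 : ℝ)..d, p (x, y) ^ 2 ≤ 0) :
    ∀ x ∈ strip d, p x = 0 := by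
  have hp2 : ContinuousOn (fun x => p x ^ 2) (strip d) := hp.pow 2
  have hM2 : ∀ x ∈ strip d, |p x ^ 2| ≤ M ^ 2 := fun x hx =>
    (abs_pow _ 2).trans_le (pow_le_pow_left₀ (abs_nonneg _) (hM x hx) 2)
  have hE0 : ∀ x, 0 ≤ ∫ y in (0 : ℝ)..d, p (x, y) ^ 2 := fun x =>
    intervalIntegral.integral_nonneg hd fun y _ => sq_nonneg _
  have hE : ∀ x, ∫ y in (0 : ℝ)..d, p (x, y) ^ 2 = 0 := by
    refine fun x => (hE0 x).antisymm' (not_lt.1 fun hx => (h (|x| + 1) (by positivity)).not_gt ?_)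
    exact intervalIntegral.integral_pos (by linarith [abs_nonneg x])
      (continuous_intervalIntegral_slice le_rfl hd le_rfl hp2 hM2).continuousOn (fun x _ => hE0 x)
      ⟨x, ⟨by linarith [neg_abs_le x], by linarith [le_abs_self x]⟩, hx⟩
  rintro ⟨x, y⟩ hy
  have hae : (fun y => p (x, y) ^ 2) =ᵐ[volume.restrict (Ioo 0 d)] 0 :=
    (integral_eq_zero_iff_of_nonneg (fun y => sq_nonneg _)
      ((intervalIntegrable_iff_integrableOn_Ioo_of_le hd).1
        (intervalIntegrable_slice le_rfl hd le_rfl hp2 hM2 x))).1 <| by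
      rw [← integral_Ioc_eq_integral_Ioo, ← intervalIntegral.integral_of_le hd, hE]
  exact pow_eq_zero_iff two_ne_zero |>.1 <|
    Measure.eqOn_open_of_ae_eq hae isOpen_Ioo (continuousOn_slice hp2 x) continuousOn_const hy

lemma eq_zero_of_integral_sq_le_sides (hd : 0 < d) (hp : ContinuousOn p (strip d))
    (hM : ∀ x ∈ strip d, |p x| ≤ M)
    (h : ∀ a b, a ≤ b → ∫ x in a..b, ∫ y in (0 : ℝ)..d, p (x, y) ^ 2 ≤
      C * ((∫ y in (0 : ℝ)..d, |p (a, y)|) + ∫ y in (0 : ℝ)..d, |p (b, y)|)) :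
    ∀ x ∈ strip d, p x = 0 := by
  set E : ℝ → ℝ := fun x => ∫ y in (0 : ℝ)..d, p (x, y) ^ 2
  set S : ℝ → ℝ := fun x => ∫ y in (0 : ℝ)..d, |p (x, y)|
  have hp2 : ContinuousOn (fun x => p x ^ 2) (strip d) := hp.pow 2
  have hM2 : ∀ x ∈ strip d, |p x ^ 2| ≤ M ^ 2 := fun x hx =>
    (abs_pow _ 2).trans_le (pow_le_pow_left₀ (abs_nonneg _) (hM x hx) 2)
  have hE : Continuous E := continuous_intervalIntegral_slice le_rfl hd.le le_rfl hp2 hM2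
  have hE0 : ∀ x, 0 ≤ E x := fun x =>
    intervalIntegral.integral_nonneg hd.le fun y _ => sq_nonneg _
  have hSE : ∀ x, S x ^ 2 ≤ d * E x := fun x => by
    simpa only [sq_abs, sub_zero] using sq_intervalIntegral_le hd
      (intervalIntegrable_slice le_rfl hd.le le_rfl hp hM x).abs
      (by simpa only [sq_abs] using intervalIntegrable_slice le_rfl hd.le le_rfl hp2 hM2 x)
  refine eq_zero_of_integral_sq_nonpos hd.le hp hM fun R hR =>
    nonpos_of_sq_le_mul_deriv (G := fun r => ∫ x in -r..r, E x) (C := 2 * C ^ 2 * d + 1)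
      (by positivity) (fun r _ => hasDerivAt_intervalIntegral_neg_self hE r) fun r hr => ?_
  have hr : 0 ≤ r := hR.trans hr
  calc (∫ x in -r..r, E x) ^ 2 ≤ (C * (S (-r) + S r)) ^ 2 :=
        pow_le_pow_left₀ (intervalIntegral.integral_nonneg (by linarith) fun x _ => hE0 x)
          (h (-r) r (by linarith)) 2
    _ = C ^ 2 * (S (-r) + S r) ^ 2 := mul_pow _ _ _
    _ ≤ C ^ 2 * (2 * (S (-r) ^ 2 + S r ^ 2)) := by gcongr; exact add_sq_le
    _ ≤ C ^ 2 * (2 * (d * E (-r) + d * E r)) := by gcongr <;> exact hSE _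
    _ ≤ (2 * C ^ 2 * d + 1) * (E r + E (-r)) := by linarith [hE0 r, hE0 (-r)]

end Slices

section StressEnergy

variable {ψ : ℝ × ℝ → ℝ} {F : ℝ → ℝ} {Q e c : ℝ} {x : ℝ × ℝ}

lemma differentiableAt_pd1 (h : ContDiffAt ℝ 2 ψ x) : DifferentiableAt ℝ (pd1 ψ) x :=
  ((h.fderiv_right (m := 1) (by norm_num)).differentiableAt one_ne_zero).clm_apply
    (differentiableAt_const _)

lemma differentiableAt_pd2 (h : ContDiffAt ℝ 2 ψ x) : DifferentiableAt ℝ (pd2 ψ) x :=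
  ((h.fderiv_right (m := 1) (by norm_num)).differentiableAt one_ne_zero).clm_apply
    (differentiableAt_const _)

lemma pd2_pd1_eq_pd1_pd2 (h : ContDiffAt ℝ 2 ψ x) : pd2 (pd1 ψ) x = pd1 (pd2 ψ) x := by
  have hd : DifferentiableAt ℝ (fderiv ℝ ψ) x :=
    (h.fderiv_right (m := 1) (by norm_num)).differentiableAt one_ne_zero
  have happly : ∀ v w : ℝ × ℝ,
      fderiv ℝ (fun y => fderiv ℝ ψ y v) x w = fderiv ℝ (fderiv ℝ ψ) x w v := fun v w => by
    simp [fderiv_clm_apply hd (differentiableAt_const v)]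
  have hsymm : IsSymmSndFDerivAt ℝ ψ x := h.isSymmSndFDerivAt (by simp)
  exact (happly _ _).trans ((hsymm.eq _ _).trans (happly _ _).symm)

/-- The difference `H(ψ) - x₂` between the time `H = travelTime F e` at which the one-dimensional
profile reaches the height `ψ x` and the height `x₂` of the point itself. It vanishes identically
when `ψ` is that profile. -/
def timeLag (F : ℝ → ℝ) (e : ℝ) (ψ : ℝ × ℝ → ℝ) (x : ℝ × ℝ) : ℝ := travelTime F e (ψ x) - x.2

/-- First component of the `x₂`-column of the stress-energy tensor of `Δψ = F'(ψ)`, weighted by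
`timeLag F e ψ`. -/
def flux1 (F : ℝ → ℝ) (e : ℝ) (ψ : ℝ × ℝ → ℝ) (x : ℝ × ℝ) : ℝ :=
  timeLag F e ψ x * -(pd1 ψ x * pd2 ψ x)

/-- Second component of the `x₂`-column of the stress-energy tensor of `Δψ = F'(ψ)`, weighted by
`timeLag F e ψ`. The potential is normalised by the additive constant `e`, so that the unweighted
component vanishes on the profile of energy `e`. -/
def flux2 (F : ℝ → ℝ) (e : ℝ) (ψ : ℝ × ℝ → ℝ) (x : ℝ × ℝ) : ℝ :=
  timeLag F e ψ x * ((pd1 ψ x ^ 2 - pd2 ψ x ^ 2) / 2 + (e + F (ψ x)))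

lemma hasFDerivAt_timeLag (hψ : DifferentiableAt ℝ ψ x) (hmem : ∀ᶠ y in nhds x, ψ y ∈ Icc 0 Q)
    (hF : ContinuousOn F (Icc 0 Q)) (hF0 : ∀ s ∈ Icc 0 Q, 0 ≤ F s) (he : 0 < e) :
    HasFDerivAt (timeLag F e ψ)
      ((√(2 * (e + F (ψ x))))⁻¹ • fderiv ℝ ψ x - ContinuousLinearMap.snd ℝ ℝ ℝ) x :=
  ((hasDerivWithinAt_travelTime hF hF0 he hmem.self_of_nhds).comp_hasFDerivAt x
    hψ.hasFDerivAt hmem).sub hasFDerivAt_snd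

lemma hasFDerivAt_flux1 (hψ : ContDiffAt ℝ 2 ψ x) (hmem : ∀ᶠ y in nhds x, ψ y ∈ Icc 0 Q)
    (hF : ContinuousOn F (Icc 0 Q)) (hF0 : ∀ s ∈ Icc 0 Q, 0 ≤ F s) (he : 0 < e) :
    HasFDerivAt (flux1 F e ψ)
      (-(timeLag F e ψ x • (pd1 ψ x • fderiv ℝ (pd2 ψ) x + pd2 ψ x • fderiv ℝ (pd1 ψ) x) +
        (pd1 ψ x * pd2 ψ x) •
          ((√(2 * (e + F (ψ x))))⁻¹ • fderiv ℝ ψ x - ContinuousLinearMap.snd ℝ ℝ ℝ))) x := by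
  have hη := hasFDerivAt_timeLag (hψ.differentiableAt two_ne_zero) hmem hF hF0 he
  refine (hη.mul ((differentiableAt_pd1 hψ).hasFDerivAt.mul
    (differentiableAt_pd2 hψ).hasFDerivAt).neg).congr_fderiv ?_
  rw [Pi.neg_apply, Pi.mul_apply]
  module

lemma hasFDerivAt_flux2 (hψ : ContDiffAt ℝ 2 ψ x) (hmem : ∀ᶠ y in nhds x, ψ y ∈ Icc 0 Q)
    (hF : ContinuousOn F (Icc 0 Q)) (hF0 : ∀ s ∈ Icc 0 Q, 0 ≤ F s) (he : 0 < e)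
    (hFc : HasDerivWithinAt F c (Icc 0 Q) (ψ x)) :
    HasFDerivAt (flux2 F e ψ)
      (timeLag F e ψ x • (pd1 ψ x • fderiv ℝ (pd1 ψ) x - pd2 ψ x • fderiv ℝ (pd2 ψ) x +
          c • fderiv ℝ ψ x) +
        ((pd1 ψ x ^ 2 - pd2 ψ x ^ 2) / 2 + (e + F (ψ x))) •
          ((√(2 * (e + F (ψ x))))⁻¹ • fderiv ℝ ψ x - ContinuousLinearMap.snd ℝ ℝ ℝ)) x := by
  have hψ' := hψ.differentiableAt two_ne_zero
  have hη := hasFDerivAt_timeLag hψ' hmem hF hF0 he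
  have hFψ : HasFDerivAt (fun y => e + F (ψ y)) (c • fderiv ℝ ψ x) x :=
    (hFc.comp_hasFDerivAt x hψ'.hasFDerivAt hmem).const_add e
  have hsq : HasFDerivAt (fun y => (pd1 ψ y ^ 2 - pd2 ψ y ^ 2) / 2)
      (pd1 ψ x • fderiv ℝ (pd1 ψ) x - pd2 ψ x • fderiv ℝ (pd2 ψ) x) x := by
    refine (((differentiableAt_pd1 hψ).hasFDerivAt.pow 2).sub
      ((differentiableAt_pd2 hψ).hasFDerivAt.pow 2)).mul_const (2⁻¹ : ℝ) |>.congr_fderiv ?_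
    module
  exact hη.mul (hsq.add hFψ)

lemma pd1_flux1_add_pd2_flux2 (hψ : ContDiffAt ℝ 2 ψ x) (hmem : ∀ᶠ y in nhds x, ψ y ∈ Icc 0 Q)
    (hF : ContinuousOn F (Icc 0 Q)) (hF0 : ∀ s ∈ Icc 0 Q, 0 ≤ F s) (he : 0 < e)
    (hFlap : HasDerivWithinAt F (lap ψ x) (Icc 0 Q) (ψ x)) :
    pd1 (flux1 F e ψ) x + pd2 (flux2 F e ψ) x =
      -((1 + pd2 ψ x * (√(2 * (e + F (ψ x))))⁻¹) / 2 *
        (pd1 ψ x ^ 2 + (√(2 * (e + F (ψ x))) - pd2 ψ x) ^ 2)) := by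
  have hpos : 0 < 2 * (e + F (ψ x)) := by linarith [hF0 _ hmem.self_of_nhds]
  have hflux1 : pd1 (flux1 F e ψ) x =
      -(timeLag F e ψ x * (pd1 ψ x * pd1 (pd2 ψ) x + pd2 ψ x * pd1 (pd1 ψ) x) +
        pd1 ψ x * pd2 ψ x * ((√(2 * (e + F (ψ x))))⁻¹ * pd1 ψ x)) := by
    rw [pd1, (hasFDerivAt_flux1 hψ hmem hF hF0 he).fderiv]
    simp only [pd1, neg_apply, add_apply, sub_apply, smul_apply, smul_eq_mul,
      ContinuousLinearMap.coe_snd']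
    ring
  have hflux2 : pd2 (flux2 F e ψ) x =
      timeLag F e ψ x * (pd1 ψ x * pd2 (pd1 ψ) x - pd2 ψ x * pd2 (pd2 ψ) x +
          lap ψ x * pd2 ψ x) +
        ((pd1 ψ x ^ 2 - pd2 ψ x ^ 2) / 2 + (e + F (ψ x))) *
          ((√(2 * (e + F (ψ x))))⁻¹ * pd2 ψ x - 1) := by
    rw [pd2, (hasFDerivAt_flux2 hψ hmem hF hF0 he hFlap).fderiv]
    simp only [pd2, add_apply, sub_apply, smul_apply, smul_eq_mul, ContinuousLinearMap.coe_snd']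
  rw [hflux1, hflux2, pd2_pd1_eq_pd1_pd2 hψ, lap]
  have hN : e + F (ψ x) = √(2 * (e + F (ψ x))) ^ 2 / 2 := by rw [Real.sq_sqrt hpos.le]; ring
  have hN0 := (Real.sqrt_pos.2 hpos).ne'
  set N := √(2 * (e + F (ψ x)))
  rw [hN]
  field_simp
  ring

lemma sq_pd1_div_two_le_neg_divergence_flux (hψ : ContDiffAt ℝ 2 ψ x)
    (hmem : ∀ᶠ y in nhds x, ψ y ∈ Icc 0 Q) (hF : ContinuousOn F (Icc 0 Q))
    (hF0 : ∀ s ∈ Icc 0 Q, 0 ≤ F s) (he : 0 < e)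
    (hFlap : HasDerivWithinAt F (lap ψ x) (Icc 0 Q) (ψ x)) (hmono : 0 ≤ pd2 ψ x) :
    pd1 ψ x ^ 2 / 2 ≤ -(pd1 (flux1 F e ψ) x + pd2 (flux2 F e ψ) x) := by
  rw [pd1_flux1_add_pd2_flux2 hψ hmem hF hF0 he hFlap, neg_neg]
  calc pd1 ψ x ^ 2 / 2 = (1 + 0) / 2 * (pd1 ψ x ^ 2 + 0) := by ring
    _ ≤ _ := by gcongr <;> positivity

end StressEnergy

lemma integral_integral_le_of_le_neg_divergence {u v g : ℝ × ℝ → ℝ} {a b c d : ℝ} (hab : a ≤ b)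
    (hcd : c ≤ d) (hu : ∀ x ∈ Icc (a, c) (b, d), DifferentiableAt ℝ u x)
    (hv : ∀ x ∈ Icc (a, c) (b, d), DifferentiableAt ℝ v x)
    (hdiv : ContinuousOn (fun x => pd1 u x + pd2 v x) (Icc (a, c) (b, d)))
    (hg : ContinuousOn g (Icc (a, c) (b, d)))
    (hle : ∀ x ∈ Icc (a, c) (b, d), g x ≤ -(pd1 u x + pd2 v x)) :
    ∫ x in a..b, ∫ y in c..d, g (x, y) ≤
      ((∫ y in c..d, u (a, y)) - ∫ y in c..d, u (b, y)) +
        ((∫ x in a..b, v (x, c)) - ∫ x in a..b, v (x, d)) := by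
  have hdivergence : ∫ x in Icc (a, c) (b, d), (pd1 u x + pd2 v x) =
      (((∫ x in a..b, v (x, d)) - ∫ x in a..b, v (x, c)) + ∫ y in c..d, u (b, y)) -
        ∫ y in c..d, u (a, y) := by
    have hIoo : Ioo a b ×ˢ Ioo c d ⊆ Icc (a, c) (b, d) := by
      rw [Icc_prod_eq]
      exact prod_mono Ioo_subset_Icc_self Ioo_subset_Icc_self
    exact integral_divergence_prod_Icc_of_hasFDerivAt_of_le u v (fderiv ℝ u) (fderiv ℝ v)
      (a, c) (b, d) ⟨hab, hcd⟩ (fun x hx => (hu x hx).continuousAt.continuousWithinAt)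
      (fun x hx => (hv x hx).continuousAt.continuousWithinAt)
      (fun x hx => (hu x (hIoo hx)).hasFDerivAt) (fun x hx => (hv x (hIoo hx)).hasFDerivAt)
      (hdiv.integrableOn_compact isCompact_Icc)
  have hg_int : IntegrableOn g (Icc (a, c) (b, d)) := hg.integrableOn_compact isCompact_Icc
  have hfubini : ∫ x in a..b, ∫ y in c..d, g (x, y) = ∫ x in Icc (a, c) (b, d), g x := by
    rw [Icc_prod_eq] at hg_int ⊢
    rw [Measure.volume_eq_prod] at hg_int ⊢
    rw [setIntegral_prod _ hg_int]
    simp only [integral_Icc_eq_integral_Ioc, intervalIntegral.integral_of_le hab,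
      intervalIntegral.integral_of_le hcd]
  have hmono := setIntegral_mono_on hg_int (hdiv.integrableOn_compact isCompact_Icc).neg
    measurableSet_Icc hle
  simp only [Pi.neg_apply, integral_neg] at hmono
  rw [hdivergence, ← hfubini] at hmono
  linarith

lemma eq_of_pd1_eq_zero {ψ : ℝ × ℝ → ℝ} {y : ℝ} (hψ : ∀ t, DifferentiableAt ℝ ψ (t, y))
    (h0 : ∀ t, pd1 ψ (t, y) = 0) (s t : ℝ) : ψ (s, y) = ψ (t, y) := by
  have hderiv : ∀ t, HasDerivAt (fun t => ψ (t, y)) 0 t := fun t =>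
    h0 t ▸ (hψ t).hasFDerivAt.comp_hasDerivAt t ((hasDerivAt_id t).prodMk (hasDerivAt_const t y))
  exact is_const_of_deriv_eq_zero (fun t => (hderiv t).differentiableAt)
    (fun t => (hderiv t).deriv) s t

/-- Solutions `ψ` of the boundary value problem `Δψ = f(ψ)` in `ℝ × (0, d)`, `ψ = 0` on `x₂ = 0`,
`ψ = Q` on `x₂ = d`, that take values in `[0, Q]`, are nondecreasing in `x₂` and are `K`-Lipschitz
up to the boundary. -/
structure IsMonotoneStripSolution (f : ℝ → ℝ) (Q d : ℝ) (K : NNReal) (ψ : ℝ × ℝ → ℝ) : Prop where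
  contDiffOn : ContDiffOn ℝ 2 ψ (strip d)
  lipschitzOnWith : LipschitzOnWith K ψ (closure (strip d))
  mem_Icc : ∀ x ∈ strip d, ψ x ∈ Icc 0 Q
  lap_eq : ∀ x ∈ strip d, lap ψ x = f (ψ x)
  bottom : ∀ x₁, ψ (x₁, 0) = 0
  top : ∀ x₁, ψ (x₁, d) = Q
  pd2_nonneg : ∀ x ∈ strip d, 0 ≤ pd2 ψ x

namespace IsMonotoneStripSolution

variable {f F : ℝ → ℝ} {Q d e a b δ B : ℝ} {K : NNReal} {ψ : ℝ × ℝ → ℝ} {x : ℝ × ℝ}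

lemma contDiffAt (h : IsMonotoneStripSolution f Q d K ψ) (hx : x ∈ strip d) :
    ContDiffAt ℝ 2 ψ x :=
  h.contDiffOn.contDiffAt ((isOpen_strip d).mem_nhds hx)

lemma eventually_mem_Icc (h : IsMonotoneStripSolution f Q d K ψ) (hx : x ∈ strip d) :
    ∀ᶠ y in nhds x, ψ y ∈ Icc 0 Q :=
  ((isOpen_strip d).eventually_mem hx).mono h.mem_Icc

lemma nonneg (h : IsMonotoneStripSolution f Q d K ψ) (hd : 0 < d) : 0 ≤ Q :=
  nonempty_Icc.1 ⟨_, h.mem_Icc (0, d / 2) ⟨half_pos hd, half_lt_self hd⟩⟩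

lemma continuousOn_pd1 (h : IsMonotoneStripSolution f Q d K ψ) :
    ContinuousOn (pd1 ψ) (strip d) := fun _ hx =>
  (differentiableAt_pd1 (h.contDiffAt hx)).continuousAt.continuousWithinAt

lemma continuousOn_pd2 (h : IsMonotoneStripSolution f Q d K ψ) :
    ContinuousOn (pd2 ψ) (strip d) := fun _ hx =>
  (differentiableAt_pd2 (h.contDiffAt hx)).continuousAt.continuousWithinAt

lemma norm_fderiv_le (h : IsMonotoneStripSolution f Q d K ψ) (hx : x ∈ strip d) :
    ‖fderiv ℝ ψ x‖ ≤ K :=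
  norm_fderiv_le_of_lipschitzOn ℝ ((isOpen_strip d).mem_nhds hx)
    (h.lipschitzOnWith.mono subset_closure)

lemma abs_pd1_le (h : IsMonotoneStripSolution f Q d K ψ) (hx : x ∈ strip d) : |pd1 ψ x| ≤ K := by
  simpa [pd1] using (fderiv ℝ ψ x).le_of_opNorm_le (h.norm_fderiv_le hx) (1, 0)

lemma abs_pd2_le (h : IsMonotoneStripSolution f Q d K ψ) (hx : x ∈ strip d) : |pd2 ψ x| ≤ K := by
  simpa [pd2] using (fderiv ℝ ψ x).le_of_opNorm_le (h.norm_fderiv_le hx) (0, 1)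

lemma abs_sub_le (h : IsMonotoneStripSolution f Q d K ψ) (hd : 0 < d) (x₁ : ℝ) {y z : ℝ}
    (hy : y ∈ Icc 0 d) (hz : z ∈ Icc 0 d) : |ψ (x₁, y) - ψ (x₁, z)| ≤ K * |y - z| := by
  have hclosure : closure (strip d) = Prod.snd ⁻¹' Icc 0 d := by
    rw [strip, ← isOpenMap_snd.preimage_closure_eq_closure_preimage continuous_snd,
      closure_Ioo hd.ne]
  simpa [Prod.dist_eq, Real.dist_eq] using
    h.lipschitzOnWith.dist_le_mul (x₁, y) (hclosure ▸ hy) (x₁, z) (hclosure ▸ hz)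

lemma abs_timeLag_le (h : IsMonotoneStripSolution f Q d K ψ) (hF : ContinuousOn F (Icc 0 Q))
    (hF0 : ∀ s ∈ Icc 0 Q, 0 ≤ F s) (he : 0 < e) (hT : travelTime F e Q ≤ d) (hx : x ∈ strip d) :
    |timeLag F e ψ x| ≤ d := by
  obtain ⟨hψ0, hψQ⟩ := h.mem_Icc x hx
  obtain ⟨hbelow, -⟩ := travelTime_sub_mem_Icc hF hF0 he le_rfl hψ0 hψQ
  obtain ⟨habove, -⟩ := travelTime_sub_mem_Icc hF hF0 he hψ0 hψQ le_rfl
  rw [travelTime_zero] at hbelow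
  rw [timeLag, abs_le]
  constructor <;> linarith [hx.1, hx.2]

lemma abs_timeLag_le_bottom (h : IsMonotoneStripSolution f Q d K ψ)
    (hF : ContinuousOn F (Icc 0 Q)) (hF0 : ∀ s ∈ Icc 0 Q, 0 ≤ F s) (he : 0 < e)
    (hx : x ∈ strip d) : |timeLag F e ψ x| ≤ ((√(2 * e))⁻¹ * K + 1) * x.2 := by
  obtain ⟨hx0, hxd⟩ := hx
  obtain ⟨hψ0, hψQ⟩ := h.mem_Icc x ⟨hx0, hxd⟩
  obtain ⟨htime0, htime⟩ := travelTime_sub_mem_Icc hF hF0 he le_rfl hψ0 hψQ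
  have hlip : ψ x ≤ K * x.2 := by
    have := h.abs_sub_le (hx0.trans hxd) x.1 ⟨hx0.le, hxd.le⟩ ⟨le_rfl, (hx0.trans hxd).le⟩
    rw [h.bottom, sub_zero, sub_zero, abs_of_pos hx0] at this
    exact le_of_abs_le this
  have hscaled : (√(2 * e))⁻¹ * ψ x ≤ (√(2 * e))⁻¹ * (K * x.2) := by gcongr
  rw [travelTime_zero, sub_zero] at htime0 htime
  rw [timeLag, abs_le]
  constructor <;> linarith

lemma abs_timeLag_le_top (h : IsMonotoneStripSolution f Q d K ψ)
    (hF : ContinuousOn F (Icc 0 Q)) (hF0 : ∀ s ∈ Icc 0 Q, 0 ≤ F s) (he : 0 < e)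
    (hT : travelTime F e Q ≤ d) (hx : x ∈ strip d) :
    |timeLag F e ψ x| ≤ (d - travelTime F e Q) + ((√(2 * e))⁻¹ * K + 1) * (d - x.2) := by
  obtain ⟨hx0, hxd⟩ := hx
  obtain ⟨hψ0, hψQ⟩ := h.mem_Icc x ⟨hx0, hxd⟩
  obtain ⟨htime0, htime⟩ := travelTime_sub_mem_Icc hF hF0 he hψ0 hψQ le_rfl
  have hlip : Q - ψ x ≤ K * (d - x.2) := by
    have := h.abs_sub_le (hx0.trans hxd) x.1 ⟨(hx0.trans hxd).le, le_rfl⟩ ⟨hx0.le, hxd.le⟩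
    rw [h.top, abs_of_pos (sub_pos.2 hxd)] at this
    exact le_of_abs_le this
  have hscaled : (√(2 * e))⁻¹ * (Q - ψ x) ≤ (√(2 * e))⁻¹ * (K * (d - x.2)) := by gcongr
  rw [timeLag, abs_le]
  constructor <;> linarith

lemma abs_flux1_le (h : IsMonotoneStripSolution f Q d K ψ) (hF : ContinuousOn F (Icc 0 Q))
    (hF0 : ∀ s ∈ Icc 0 Q, 0 ≤ F s) (he : 0 < e) (hT : travelTime F e Q ≤ d) (hx : x ∈ strip d) :
    |flux1 F e ψ x| ≤ d * K * |pd1 ψ x| := by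
  have hd : 0 ≤ d := (hx.1.trans hx.2).le
  calc |flux1 F e ψ x| = |timeLag F e ψ x| * (|pd1 ψ x| * |pd2 ψ x|) := by
        rw [flux1, abs_mul, abs_neg, abs_mul]
    _ ≤ d * (|pd1 ψ x| * K) := by
        gcongr
        exacts [h.abs_timeLag_le hF hF0 he hT hx, h.abs_pd2_le hx]
    _ = d * K * |pd1 ψ x| := by ring

lemma abs_flux2_le (h : IsMonotoneStripSolution f Q d K ψ) (hF0 : ∀ s ∈ Icc 0 Q, 0 ≤ F s)
    (he : 0 < e) (hB : ∀ s ∈ Icc 0 Q, e + F s ≤ B) (hx : x ∈ strip d) :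
    |flux2 F e ψ x| ≤ |timeLag F e ψ x| * (K ^ 2 + B) := by
  rw [flux2, abs_mul]
  gcongr
  have h₁ := sq_le_sq' (neg_le_of_abs_le (h.abs_pd1_le hx)) (le_of_abs_le (h.abs_pd1_le hx))
  have h₂ := sq_le_sq' (neg_le_of_abs_le (h.abs_pd2_le hx)) (le_of_abs_le (h.abs_pd2_le hx))
  have hF0 := hF0 _ (h.mem_Icc x hx)
  have hB := hB _ (h.mem_Icc x hx)
  rw [abs_le]
  constructor <;> linarith [sq_nonneg (pd1 ψ x), sq_nonneg (pd2 ψ x)]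

lemma continuousOn_divergence_flux (h : IsMonotoneStripSolution f Q d K ψ)
    (hF : ∀ s ∈ Icc 0 Q, HasDerivWithinAt F (f s) (Icc 0 Q) s) (hF0 : ∀ s ∈ Icc 0 Q, 0 ≤ F s)
    (he : 0 < e) :
    ContinuousOn (fun x => pd1 (flux1 F e ψ) x + pd2 (flux2 F e ψ) x) (strip d) := by
  have hFc : ContinuousOn F (Icc 0 Q) := fun s hs => (hF s hs).continuousWithinAt
  have hFψ : ContinuousOn (fun x => F (ψ x)) (strip d) :=
    hFc.comp h.contDiffOn.continuousOn h.mem_Icc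
  have hN : ContinuousOn (fun x => √(2 * (e + F (ψ x)))) (strip d) :=
    (continuousOn_const.mul (continuousOn_const.add hFψ)).sqrt
  have hN0 : ∀ x ∈ strip d, √(2 * (e + F (ψ x))) ≠ 0 := fun x hx =>
    (Real.sqrt_pos.2 (by linarith [hF0 _ (h.mem_Icc x hx)])).ne'
  refine ContinuousOn.congr (((continuousOn_const.add
    (h.continuousOn_pd2.mul (hN.inv₀ hN0))).div_const 2).mul
      ((h.continuousOn_pd1.pow 2).add ((hN.sub h.continuousOn_pd2).pow 2))).neg fun x hx =>
    pd1_flux1_add_pd2_flux2 (h.contDiffAt hx) (h.eventually_mem_Icc hx) hFc hF0 he ?_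
  rw [h.lap_eq x hx]
  exact hF _ (h.mem_Icc x hx)

lemma integral_sq_pd1_le_flux (h : IsMonotoneStripSolution f Q d K ψ)
    (hF : ∀ s ∈ Icc 0 Q, HasDerivWithinAt F (f s) (Icc 0 Q) s) (hF0 : ∀ s ∈ Icc 0 Q, 0 ≤ F s)
    (he : 0 < e) (hab : a ≤ b) (hδ : 0 < δ) (hδd : δ ≤ d / 2) :
    ∫ x in a..b, ∫ y in δ..d - δ, pd1 ψ (x, y) ^ 2 / 2 ≤
      ((∫ y in δ..d - δ, flux1 F e ψ (a, y)) - ∫ y in δ..d - δ, flux1 F e ψ (b, y)) +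
        ((∫ x in a..b, flux2 F e ψ (x, δ)) - ∫ x in a..b, flux2 F e ψ (x, d - δ)) := by
  have hFc : ContinuousOn F (Icc 0 Q) := fun s hs => (hF s hs).continuousWithinAt
  have hFlap : ∀ x ∈ strip d, HasDerivWithinAt F (lap ψ x) (Icc 0 Q) (ψ x) := fun x hx => by
    rw [h.lap_eq x hx]
    exact hF _ (h.mem_Icc x hx)
  have hrect : Icc (a, δ) (b, d - δ) ⊆ strip d := fun x hx =>
    ⟨hδ.trans_le hx.1.2, hx.2.2.trans_lt (sub_lt_self d hδ)⟩
  refine integral_integral_le_of_le_neg_divergence hab (by linarith)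
    (fun x hx => (hasFDerivAt_flux1 (h.contDiffAt (hrect hx)) (h.eventually_mem_Icc (hrect hx))
      hFc hF0 he).differentiableAt)
    (fun x hx => (hasFDerivAt_flux2 (h.contDiffAt (hrect hx)) (h.eventually_mem_Icc (hrect hx))
      hFc hF0 he (hFlap x (hrect hx))).differentiableAt)
    ((h.continuousOn_divergence_flux hF hF0 he).mono hrect)
    (((h.continuousOn_pd1.pow 2).div_const 2).mono hrect) fun x hx => ?_
  exact sq_pd1_div_two_le_neg_divergence_flux (h.contDiffAt (hrect hx))
    (h.eventually_mem_Icc (hrect hx)) hFc hF0 he (hFlap x (hrect hx)) (h.pd2_nonneg x (hrect hx))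

lemma abs_integral_flux1_le (h : IsMonotoneStripSolution f Q d K ψ)
    (hF : ContinuousOn F (Icc 0 Q)) (hF0 : ∀ s ∈ Icc 0 Q, 0 ≤ F s) (he : 0 < e)
    (hT : travelTime F e Q ≤ d) (hδ : 0 < δ) (hδd : δ ≤ d / 2) (x₁ : ℝ) :
    |∫ y in δ..d - δ, flux1 F e ψ (x₁, y)| ≤ d * K * ∫ y in (0 : ℝ)..d, |pd1 ψ (x₁, y)| := by
  have hd : 0 ≤ d := by linarith
  have hint : IntervalIntegrable (fun y => |pd1 ψ (x₁, y)|) volume 0 d :=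
    (intervalIntegrable_slice le_rfl hd le_rfl h.continuousOn_pd1 (fun _ => h.abs_pd1_le) x₁).abs
  calc |∫ y in δ..d - δ, flux1 F e ψ (x₁, y)|
      ≤ ∫ y in δ..d - δ, d * K * |pd1 ψ (x₁, y)| := by
        rw [← Real.norm_eq_abs]
        refine intervalIntegral.norm_integral_le_of_norm_le (by linarith)
          (.of_forall fun y hy => h.abs_flux1_le hF hF0 he hT (x := (x₁, y)) ?_)
          ((intervalIntegrable_slice hδ.le (by linarith) (by linarith) h.continuousOn_pd1
            (fun _ => h.abs_pd1_le) x₁).abs.const_mul _)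
        exact ⟨hδ.trans hy.1, hy.2.trans_lt (sub_lt_self d hδ)⟩
    _ = d * K * ∫ y in δ..d - δ, |pd1 ψ (x₁, y)| := intervalIntegral.integral_const_mul _ _
    _ ≤ d * K * ∫ y in (0 : ℝ)..d, |pd1 ψ (x₁, y)| := by
        gcongr
        exact intervalIntegral.integral_mono_interval hδ.le (by linarith) (by linarith)
          (.of_forall fun y => abs_nonneg _) hint

lemma abs_integral_flux2_le (h : IsMonotoneStripSolution f Q d K ψ)
    (hF0 : ∀ s ∈ Icc 0 Q, 0 ≤ F s) (he : 0 < e) (hB : ∀ s ∈ Icc 0 Q, e + F s ≤ B)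
    (hab : a ≤ b) {y c : ℝ} (hy : y ∈ Ioo 0 d) (hc : ∀ x₁, |timeLag F e ψ (x₁, y)| ≤ c) :
    |∫ x in a..b, flux2 F e ψ (x, y)| ≤ c * (K ^ 2 + B) * (b - a) := by
  have hB0 : 0 ≤ B := by
    have hmem := h.mem_Icc (0, y) hy
    linarith [hB _ hmem, hF0 _ hmem]
  have hflux2 : ∀ x₁, ‖flux2 F e ψ (x₁, y)‖ ≤ c * (K ^ 2 + B) := fun x₁ =>
    (h.abs_flux2_le hF0 he hB (x := (x₁, y)) hy).trans
      (mul_le_mul_of_nonneg_right (hc x₁) (by positivity))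
  rw [← Real.norm_eq_abs, ← abs_of_nonneg (sub_nonneg.2 hab)]
  exact intervalIntegral.norm_integral_le_of_norm_le_const fun x₁ _ => hflux2 x₁

lemma truncated_integral_sq_pd1_le (h : IsMonotoneStripSolution f Q d K ψ)
    (hF : ∀ s ∈ Icc 0 Q, HasDerivWithinAt F (f s) (Icc 0 Q) s) (hF0 : ∀ s ∈ Icc 0 Q, 0 ≤ F s)
    (he : 0 < e) (hT : travelTime F e Q ≤ d) (hB : ∀ s ∈ Icc 0 Q, e + F s ≤ B) (hab : a ≤ b)
    (hδ : 0 < δ) (hδd : δ ≤ d / 2) :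
    ∫ x in a..b, ∫ y in δ..d - δ, pd1 ψ (x, y) ^ 2 / 2 ≤
      d * K * ((∫ y in (0 : ℝ)..d, |pd1 ψ (a, y)|) + ∫ y in (0 : ℝ)..d, |pd1 ψ (b, y)|) +
        ((d - travelTime F e Q) + 2 * (((√(2 * e))⁻¹ * K + 1) * δ)) * (K ^ 2 + B) * (b - a) := by
  have hFc : ContinuousOn F (Icc 0 Q) := fun s hs => (hF s hs).continuousWithinAt
  have hbottom : δ ∈ Ioo 0 d := ⟨hδ, by linarith⟩
  have htop : d - δ ∈ Ioo 0 d := ⟨by linarith, by linarith⟩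
  have hleft := abs_le.1 (h.abs_integral_flux1_le hFc hF0 he hT hδ hδd a)
  have hright := abs_le.1 (h.abs_integral_flux1_le hFc hF0 he hT hδ hδd b)
  have hlow := abs_le.1 <| h.abs_integral_flux2_le (y := δ) (c := ((√(2 * e))⁻¹ * K + 1) * δ)
    hF0 he hB hab hbottom fun x₁ => h.abs_timeLag_le_bottom hFc hF0 he (x := (x₁, δ)) hbottom
  have hhigh := abs_le.1 <| h.abs_integral_flux2_le (y := d - δ)
    (c := (d - travelTime F e Q) + ((√(2 * e))⁻¹ * K + 1) * (d - (d - δ))) hF0 he hB hab htop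
    fun x₁ => h.abs_timeLag_le_top hFc hF0 he hT (x := (x₁, d - δ)) htop
  linarith [h.integral_sq_pd1_le_flux hF hF0 he hab hδ hδd, hleft.2, hright.1, hlow.2, hhigh.1]

lemma integral_sq_pd1_le_add (h : IsMonotoneStripSolution f Q d K ψ) (hab : a ≤ b)
    (hδ : 0 < δ) (hδd : δ ≤ d / 2) :
    ∫ x in a..b, ∫ y in (0 : ℝ)..d, pd1 ψ (x, y) ^ 2 / 2 ≤
      (∫ x in a..b, ∫ y in δ..d - δ, pd1 ψ (x, y) ^ 2 / 2) + K ^ 2 * δ * (b - a) := by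
  have hd : 0 ≤ d := by linarith
  have hp : ContinuousOn (fun x => pd1 ψ x ^ 2 / 2) (strip d) :=
    (h.continuousOn_pd1.pow 2).div_const 2
  have hM : ∀ x ∈ strip d, |pd1 ψ x ^ 2 / 2| ≤ (K : ℝ) ^ 2 / 2 := fun x hx => by
    rw [abs_div, abs_pow, abs_two]
    gcongr
    exact h.abs_pd1_le hx
  have hcont : Continuous fun x => ∫ y in δ..d - δ, pd1 ψ (x, y) ^ 2 / 2 :=
    continuous_intervalIntegral_slice hδ.le (by linarith) (by linarith) hp hM
  calc ∫ x in a..b, ∫ y in (0 : ℝ)..d, pd1 ψ (x, y) ^ 2 / 2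
      ≤ ∫ x in a..b, ((∫ y in δ..d - δ, pd1 ψ (x, y) ^ 2 / 2) + 2 * (K ^ 2 / 2) * δ) :=
        intervalIntegral.integral_mono hab
          ((continuous_intervalIntegral_slice le_rfl hd le_rfl hp hM).intervalIntegrable _ _)
          ((hcont.add continuous_const).intervalIntegrable _ _) fun x =>
            intervalIntegral_le_add_of_abs_le hδ.le hδd
              (intervalIntegrable_slice le_rfl hd le_rfl hp hM x) fun y hy => hM (x, y) hy
    _ = _ := by
        rw [intervalIntegral.integral_add (hcont.intervalIntegrable _ _) intervalIntegrable_const,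
          intervalIntegral.integral_const, smul_eq_mul]
        ring

lemma integral_sq_pd1_le_of_travelTime_le (h : IsMonotoneStripSolution f Q d K ψ) (hd : 0 < d)
    (hF : ∀ s ∈ Icc 0 Q, HasDerivWithinAt F (f s) (Icc 0 Q) s) (hF0 : ∀ s ∈ Icc 0 Q, 0 ≤ F s)
    (he : 0 < e) (hT : travelTime F e Q ≤ d) (hB : ∀ s ∈ Icc 0 Q, e + F s ≤ B) (hab : a ≤ b) :
    ∫ x in a..b, ∫ y in (0 : ℝ)..d, pd1 ψ (x, y) ^ 2 / 2 ≤
      d * K * ((∫ y in (0 : ℝ)..d, |pd1 ψ (a, y)|) + ∫ y in (0 : ℝ)..d, |pd1 ψ (b, y)|) +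
        (d - travelTime F e Q) * (K ^ 2 + B) * (b - a) := by
  set S := d * K * ((∫ y in (0 : ℝ)..d, |pd1 ψ (a, y)|) + ∫ y in (0 : ℝ)..d, |pd1 ψ (b, y)|)
  have hlim : Filter.Tendsto (fun δ => S + ((d - travelTime F e Q) +
      2 * (((√(2 * e))⁻¹ * K + 1) * δ)) * (K ^ 2 + B) * (b - a) + K ^ 2 * δ * (b - a))
      (nhdsWithin 0 (Ioi 0)) (nhds (S + (d - travelTime F e Q) * (K ^ 2 + B) * (b - a))) :=
    (Continuous.tendsto' (by fun_prop) 0 _ (by ring)).mono_left nhdsWithin_le_nhds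
  refine ge_of_tendsto hlim ?_
  filter_upwards [Ioo_mem_nhdsGT (half_pos hd)] with δ hδ
  linarith [h.integral_sq_pd1_le_add hab hδ.1 hδ.2.le,
    h.truncated_integral_sq_pd1_le hF hF0 he hT hB hab hδ.1 hδ.2.le]

lemma integral_sq_pd1_le (h : IsMonotoneStripSolution f Q d K ψ) (hd : 0 < d)
    (hF : ∀ s ∈ Icc 0 Q, HasDerivWithinAt F (f s) (Icc 0 Q) s) (hF0 : ∀ s ∈ Icc 0 Q, 0 ≤ F s)
    (hT : ∀ d' < d, ∃ e > 0, d' ≤ travelTime F e Q) (hab : a ≤ b) :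
    ∫ x in a..b, ∫ y in (0 : ℝ)..d, pd1 ψ (x, y) ^ 2 / 2 ≤
      d * K * ((∫ y in (0 : ℝ)..d, |pd1 ψ (a, y)|) + ∫ y in (0 : ℝ)..d, |pd1 ψ (b, y)|) := by
  have hFc : ContinuousOn F (Icc 0 Q) := fun s hs => (hF s hs).continuousWithinAt
  have hQ := h.nonneg hd
  -- The energies `e` below have travel time at least `d / 2`, so `e + F` stays bounded as `d' → d`.
  obtain ⟨A, hA⟩ := isCompact_Icc.bddAbove_image hFc
  set S := d * K * ((∫ y in (0 : ℝ)..d, |pd1 ψ (a, y)|) + ∫ y in (0 : ℝ)..d, |pd1 ψ (b, y)|)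
  set B := (Q / (d / 2)) ^ 2 / 2 + A
  have hlim : Filter.Tendsto (fun d' => S + (d - d') * (K ^ 2 + B) * (b - a))
      (nhdsWithin d (Iio d)) (nhds S) :=
    (Continuous.tendsto' (by fun_prop) d _ (by ring)).mono_left nhdsWithin_le_nhds
  refine ge_of_tendsto hlim ?_
  filter_upwards [Ioo_mem_nhdsLT (half_lt_self hd)] with d' hd'
  obtain ⟨e₀, he₀, hle⟩ := hT d' hd'.2
  obtain ⟨e, he, rfl⟩ := exists_travelTime_eq hFc hF0 hQ ((half_pos hd).trans hd'.1) he₀ hle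
  have heB : e ≤ (Q / (d / 2)) ^ 2 / 2 :=
    energy_le_of_le_travelTime hFc hF0 he hQ (half_pos hd) hd'.1.le
  exact h.integral_sq_pd1_le_of_travelTime_le hd hF hF0 he hd'.2.le
    (fun s hs => add_le_add heB (hA (mem_image_of_mem F hs))) hab

lemma pd1_eq_zero (h : IsMonotoneStripSolution f Q d K ψ) (hd : 0 < d)
    (hF : ∀ s ∈ Icc 0 Q, HasDerivWithinAt F (f s) (Icc 0 Q) s) (hF0 : ∀ s ∈ Icc 0 Q, 0 ≤ F s)
    (hT : ∀ d' < d, ∃ e > 0, d' ≤ travelTime F e Q) : ∀ x ∈ strip d, pd1 ψ x = 0 := by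
  refine eq_zero_of_integral_sq_le_sides (C := 2 * (d * K)) hd h.continuousOn_pd1
    (fun _ => h.abs_pd1_le) fun a b hab => ?_
  have hle := h.integral_sq_pd1_le hd hF hF0 hT hab
  simp only [intervalIntegral.integral_div] at hle
  linarith

end IsMonotoneStripSolution

lemma isProfileFromRest_cubic {κ : ℝ → ℝ} {Q : ℝ} (hQ : 0 < Q)
    (hκ : ∀ t ∈ Icc (0 : ℝ) 1, κ (Q * (3 * t ^ 2 - 2 * t ^ 3)) = t) :
    IsProfileFromRest (fun s => 6 * Q * (1 - 2 * κ s)) (fun t => Q * (3 * t ^ 2 - 2 * t ^ 3))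
      (fun t => 6 * Q * (t - t ^ 2)) Q 1 where
  hasDerivWithinAt t _ := by
    refine HasDerivAt.hasDerivWithinAt <| (((hasDerivAt_pow 2 t).const_mul 3).sub
      ((hasDerivAt_pow 3 t).const_mul 2)).const_mul Q |>.congr_deriv ?_
    push_cast
    ring
  hasDerivWithinAt_velocity t ht := by
    rw [hκ t ht]
    refine HasDerivAt.hasDerivWithinAt <|
      ((hasDerivAt_id t).sub (hasDerivAt_pow 2 t)).const_mul (6 * Q) |>.congr_deriv ?_
    push_cast
    ring
  velocity_pos t ht := by
    have : 0 < t * (1 - t) := mul_pos ht.1 (sub_pos.2 ht.2)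
    exact mul_pos (by positivity) (by linarith)
  start := by ring
  velocity_start := by ring
  arrival := by ring

lemma exists_cubic_potential {κ : ℝ → ℝ} {Q : ℝ} (hQ : 0 < Q)
    (hκ : ∀ t ∈ Icc (0 : ℝ) 1, κ (Q * (3 * t ^ 2 - 2 * t ^ 3)) = t) :
    ∃ F : ℝ → ℝ, (∀ s ∈ Icc 0 Q, HasDerivWithinAt F (6 * Q * (1 - 2 * κ s)) (Icc 0 Q) s) ∧
      (∀ s ∈ Icc 0 Q, 0 ≤ F s) ∧ ∀ d < 1, ∃ e > 0, d ≤ travelTime F e Q := by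
  have hprofile := isProfileFromRest_cubic hQ hκ
  have hκc : ContinuousOn κ (Icc 0 Q) := by
    rw [← hprofile.image_Icc zero_le_one]
    exact continuousOn_image_of_leftInvOn isCompact_Icc hprofile.continuousOn hκ
  exact hprofile.exists_potential zero_le_one (by fun_prop)

theorem stmt16_general {f F : ℝ → ℝ} {Q d : ℝ} {K : NNReal} {ψ : ℝ × ℝ → ℝ} (hd : 0 < d)
    (hF : ∀ s ∈ Icc 0 Q, HasDerivWithinAt F (f s) (Icc 0 Q) s) (hF0 : ∀ s ∈ Icc 0 Q, 0 ≤ F s)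
    (hT : ∀ d' < d, ∃ e > 0, d' ≤ travelTime F e Q) (h : IsMonotoneStripSolution f Q d K ψ) :
    ∃ g : ℝ → ℝ, ∀ x ∈ strip d, ψ x = g x.2 :=
  ⟨fun y => ψ (0, y), fun x hx => eq_of_pd1_eq_zero
    (fun t => (h.contDiffAt (x := (t, x.2)) hx).differentiableAt two_ne_zero)
    (fun t => h.pd1_eq_zero hd hF hF0 hT (t, x.2) hx) x.1 0⟩

/-- Liouville type theorem in the strip `Ω̂^d = ℝ × (0,d)`: a solution `ψ` of
`Δψ = f(ψ)` with `ψ = 0` on the bottom, `ψ = Q` on the top, `0 ≤ ψ ≤ Q`,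
`∂_{x₂}ψ ≥ 0`, `ψ ∈ C²(Ω̂^d)` and Lipschitz on the closure, depends only on `x₂`. -/
theorem stmt16
    (Q : ℝ) (hQ : 0 < Q)
    (κ : ℝ → ℝ) (hκ : ∀ t ∈ Set.Icc (0 : ℝ) 1, κ (Q * (3 * t ^ 2 - 2 * t ^ 3)) = t)
    (f : ℝ → ℝ) (hf : ∀ s : ℝ, f s = 6 * Q * (1 - 2 * κ s))
    (d : ℝ) (hd : d ∈ Set.Ioc (0 : ℝ) 1)
    (Ωd : Set (ℝ × ℝ)) (hΩd : Ωd = {x : ℝ × ℝ | 0 < x.2 ∧ x.2 < d})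
    (ψ : ℝ × ℝ → ℝ)
    (hC2 : ContDiffOn ℝ 2 ψ Ωd)
    (hLip : ∃ K, LipschitzOnWith K ψ (closure Ωd))
    (hbd : ∀ x ∈ Ωd, 0 ≤ ψ x ∧ ψ x ≤ Q)
    (heq : ∀ x ∈ Ωd, lap ψ x = f (ψ x))
    (hbot : ∀ x₁ : ℝ, ψ (x₁, 0) = 0)
    (htop : ∀ x₁ : ℝ, ψ (x₁, d) = Q)
    (hmono : ∀ x ∈ Ωd, 0 ≤ pd2 ψ x) :
    ∃ g : ℝ → ℝ, ∀ x ∈ Ωd, ψ x = g x.2 := by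
  obtain ⟨K, hK⟩ := hLip
  obtain rfl : f = fun s => 6 * Q * (1 - 2 * κ s) := funext hf
  obtain ⟨F, hF, hF0, hT⟩ := exists_cubic_potential hQ hκ
  subst hΩd
  exact stmt16_general hd.1 hF hF0 (fun d' hd' => hT d' (hd'.trans_le hd.2))
    ⟨hC2, hK, hbd, heq, hbot, htop, hmono⟩
end
end

section
/- Let ψ∈C²(Ω) be Lipschitz continuous on Ω̄ with 0≤ψ≤Q, Δψ=f(ψ) in Ω, ψ=0 on Γ₀, ψ=Q on Γ₁, and ∂_{x₂}ψ≥0 in Ω. Then 0<ψ(x)<Q and ∂_{x₂}ψ(x)>0 for every x∈Ω. -/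
open Real Set MeasureTheory

noncomputable section

/-
The increments `ψ (· + h e) - ψ` in a direction `e` with `∂ₑψ ≥ 0` are nonnegative, and they are
superharmonic because `f` is antitone. Comparison with a Hopf barrier on an annulus bounds them
below by a fixed multiple of their lower bound near the centre; dividing by `h` and letting `h → 0`
gives the strong minimum principle for `∂ₑψ`. In the theorem, `ψ` increases from `0` to `Q` along
each vertical segment of `Ω`, so `∂₂ψ` is positive somewhere on it by the mean value theorem, hence
everywhere on it, and then `ψ` is strictly increasing along it.
-/

section StrongMinimumPrinciple

open Filter Topology InnerProductSpace Laplacian Metric Module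

theorem deriv_deriv_nonneg_of_isLocalMin {g : ℝ → ℝ} {a : ℝ} (hmin : IsLocalMin g a)
    (hg : ContinuousAt g a) : 0 ≤ deriv (deriv g) a := by
  by_contra! hneg
  have hmax : IsLocalMax g a := isLocalMax_of_deriv_deriv_neg hneg hmin.deriv_eq_zero hg
  have hconst : g =ᶠ[𝓝 a] fun _ => g a := by
    filter_upwards [hmin, hmax] with s hge hle using le_antisymm hle hge
  have hderiv : deriv g =ᶠ[𝓝 a] fun _ => 0 := by
    simpa only [deriv_const'] using hconst.deriv
  rw [hderiv.deriv_eq, deriv_const] at hneg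
  exact hneg.false

section NormedSpace

variable {E F : Type*} [NormedAddCommGroup E] [NormedSpace ℝ E] [NormedAddCommGroup F]
  [NormedSpace ℝ F]

theorem hasDerivAt_comp_add_smul {f : E → F} {x e : E} {t : ℝ}
    (hf : DifferentiableAt ℝ f (x + t • e)) :
    HasDerivAt (fun s : ℝ => f (x + s • e)) (fderiv ℝ f (x + t • e) e) t := by
  have hline : HasDerivAt (fun s : ℝ => x + s • e) e t := by
    simpa only [one_smul, id_eq] using ((hasDerivAt_id t).smul_const e).const_add x
  exact hf.hasFDerivAt.comp_hasDerivAt t hline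

theorem fderiv_fderiv_apply_eq_iteratedFDeriv {f : E → F} {x : E} (hf : ContDiffAt ℝ 2 f x)
    (e : E) :
    fderiv ℝ (fun z => fderiv ℝ f z e) x e = iteratedFDeriv ℝ 2 f x ![e, e] := by
  have hf' : DifferentiableAt ℝ (fderiv ℝ f) x :=
    (hf.fderiv_right (m := 1) (by norm_num)).differentiableAt (by norm_num)
  rw [fderiv_clm_apply hf' (differentiableAt_const e), iteratedFDeriv_two_apply]
  simp

theorem deriv_deriv_comp_add_smul {f : E → F} {x : E} (hf : ContDiffAt ℝ 2 f x) (e : E) :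
    deriv (deriv fun s : ℝ => f (x + s • e)) 0 = iteratedFDeriv ℝ 2 f x ![e, e] := by
  have hf' : DifferentiableAt ℝ (fun z => fderiv ℝ f z e) (x + (0 : ℝ) • e) := by
    rw [zero_smul, add_zero]
    exact ((hf.fderiv_right (m := 1) (by norm_num)).differentiableAt (by norm_num)).clm_apply
      (differentiableAt_const e)
  have hderiv : (deriv fun s : ℝ => f (x + s • e)) =ᶠ[𝓝 0] fun s => fderiv ℝ f (x + s • e) e := by
    have htends : Tendsto (fun s : ℝ => x + s • e) (𝓝 0) (𝓝 x) := by
      have hline : Continuous fun s : ℝ => x + s • e := by fun_prop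
      simpa only [zero_smul, add_zero] using hline.tendsto 0
    filter_upwards [htends.eventually (hf.eventually (by simp))] with s hs
    exact (hasDerivAt_comp_add_smul (hs.differentiableAt (by norm_num))).deriv
  rw [hderiv.deriv_eq, (hasDerivAt_comp_add_smul hf').deriv, zero_smul, add_zero,
    fderiv_fderiv_apply_eq_iteratedFDeriv hf]

theorem mul_le_sub_of_le_fderiv {s : Set E} (hs : Convex ℝ s) {u : E → ℝ} {e : E} {c : ℝ}
    (hu : ∀ x ∈ s, DifferentiableAt ℝ u x) (hc : ∀ x ∈ s, c ≤ fderiv ℝ u x e) {x : E} {h : ℝ}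
    (hh : 0 ≤ h) (hx : x ∈ s) (hxh : x + h • e ∈ s) : c * h ≤ u (x + h • e) - u x := by
  have hline : ∀ t ∈ Icc 0 h, x + t • e ∈ s := by
    intro t ht
    have hpre : Convex ℝ ((fun t : ℝ => x + t • e) ⁻¹' s) := by
      simpa [AffineMap.lineMap_apply, Function.comp_def, preimage, add_comm] using
        hs.affine_preimage (AffineMap.lineMap x (x + e) : ℝ →ᵃ[ℝ] E)
    exact hpre.ordConnected.out (by simpa using hx) hxh ht
  have hderiv : ∀ t ∈ Icc 0 h,
      HasDerivAt (fun t : ℝ => u (x + t • e)) (fderiv ℝ u (x + t • e) e) t := fun t ht =>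
    hasDerivAt_comp_add_smul (hu _ (hline t ht))
  have hmvt := (convex_Icc 0 h).mul_sub_le_image_sub_of_le_deriv
    (fun t ht => (hderiv t ht).continuousAt.continuousWithinAt)
    (fun t ht => (hderiv t (interior_subset ht)).differentiableAt.differentiableWithinAt)
    (fun t ht => (hc _ (hline t (interior_subset ht))).trans_eq
      (hderiv t (interior_subset ht)).deriv.symm)
    0 (left_mem_Icc.2 hh) h (right_mem_Icc.2 hh) hh
  simpa only [sub_zero, zero_smul, add_zero] using hmvt

theorem le_fderiv_of_eventually_mul_le_sub {u : E → ℝ} {x e : E} {c : ℝ}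
    (hu : DifferentiableAt ℝ u x) (hc : ∀ᶠ h : ℝ in 𝓝[>] 0, c * h ≤ u (x + h • e) - u x) :
    c ≤ fderiv ℝ u x e := by
  refine ge_of_tendsto (hu.hasFDerivAt.hasLineDerivAt e).tendsto_slope_zero_right ?_
  filter_upwards [hc, self_mem_nhdsWithin] with h hle hpos
  rwa [smul_eq_mul, inv_mul_eq_div, le_div_iff₀ hpos]

theorem continuousAt_fderiv_apply {f : E → F} {x : E} {n : WithTop ℕ∞} (hf : ContDiffAt ℝ n f x)
    (hn : 1 ≤ n) (e : E) : ContinuousAt (fun z => fderiv ℝ f z e) x :=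
  (hf.fderiv_right (m := 0) (by simpa using hn)).continuousAt.clm_apply continuousAt_const

theorem eventually_forall_add_smul_mem_ball (y e : E) {r R : ℝ} (hrR : r < R) :
    ∀ᶠ h : ℝ in 𝓝 0, ∀ x ∈ closedBall y r, x + h • e ∈ ball y R := by
  have hcont : ContinuousAt (fun h : ℝ => r + ‖h • e‖) 0 := by fun_prop
  have hsmall : ∀ᶠ h : ℝ in 𝓝 0, r + ‖h • e‖ < R := hcont.eventually_lt_const (by simpa using hrR)
  filter_upwards [hsmall] with h hh x hx
  calc dist (x + h • e) y ≤ dist x y + ‖h • e‖ := by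
        simpa only [dist_eq_norm, add_sub_right_comm] using norm_add_le (x - y) (h • e)
    _ ≤ r + ‖h • e‖ := by gcongr; exact hx
    _ < R := hh

end NormedSpace

theorem frontier_closedBall_diff_ball_subset {X : Type*} [PseudoMetricSpace X] (y : X) (r R : ℝ) :
    frontier (closedBall y R \ ball y r) ⊆ sphere y R ∪ sphere y r := by
  rw [sdiff_eq]
  refine (frontier_inter_subset _ _).trans (union_subset_union ?_ ?_)
  · exact inter_subset_left.trans frontier_closedBall_subset_sphere
  · rw [frontier_compl]
    exact inter_subset_right.trans frontier_ball_subset_sphere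

theorem hasDerivAt_exp_neg_mul_quadratic (A b c s : ℝ) :
    HasDerivAt (fun s => rexp (-(A * (c + 2 * b * s + s ^ 2))))
      (-(2 * A * (b + s)) * rexp (-(A * (c + 2 * b * s + s ^ 2)))) s := by
  have hquad : HasDerivAt (fun s : ℝ => c + 2 * b * s + s ^ 2) (2 * b + 2 * s) s := by
    simpa using (((hasDerivAt_id s).const_mul (2 * b)).const_add c).fun_add (hasDerivAt_pow 2 s)
  exact (hquad.const_mul A).fun_neg.exp.congr_deriv (by ring)

theorem deriv_deriv_exp_neg_mul_quadratic (A b c : ℝ) :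
    deriv (deriv fun s => rexp (-(A * (c + 2 * b * s + s ^ 2)))) 0 =
      (4 * A ^ 2 * b ^ 2 - 2 * A) * rexp (-(A * c)) := by
  have hlin : HasDerivAt (fun s : ℝ => -(2 * A * (b + s))) (-(2 * A)) 0 := by
    simpa using ((hasDerivAt_id (0 : ℝ)).const_add b).const_mul (2 * A) |>.fun_neg
  rw [funext fun s => (hasDerivAt_exp_neg_mul_quadratic A b c s).deriv,
    (hlin.fun_mul (hasDerivAt_exp_neg_mul_quadratic A b c 0)).deriv]
  ring_nf

variable {E : Type*} [NormedAddCommGroup E]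

/-- The Gaussian `exp (-A |x - y|²)` centred at `y`, Hopf's barrier for the strong minimum
principle: it is strictly subharmonic where `2 A |x - y|²` exceeds the dimension. -/
def hopfBarrier (A : ℝ) (y x : E) : ℝ := rexp (-(A * ‖x - y‖ ^ 2))

theorem hopfBarrier_le_one {A : ℝ} (hA : 0 ≤ A) (y x : E) : hopfBarrier A y x ≤ 1 :=
  exp_le_one_iff.2 (neg_nonpos.2 (by positivity))

theorem exp_lt_hopfBarrier {A R : ℝ} (hA : 0 < A) {y x : E} (hx : x ∈ ball y R) :
    rexp (-(A * R ^ 2)) < hopfBarrier A y x := by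
  rw [hopfBarrier, exp_lt_exp, neg_lt_neg_iff]
  exact mul_lt_mul_of_pos_left
    (pow_lt_pow_left₀ (mem_ball_iff_norm.1 hx) (norm_nonneg _) two_ne_zero) hA

variable [InnerProductSpace ℝ E]

theorem contDiff_hopfBarrier (A : ℝ) (y : E) : ContDiff ℝ 2 (hopfBarrier A y) :=
  (contDiff_const.mul ((contDiff_id.sub contDiff_const).norm_sq ℝ)).neg.exp

theorem iteratedFDeriv_two_hopfBarrier (A : ℝ) (y x : E) {e : E} (he : ‖e‖ = 1) :
    iteratedFDeriv ℝ 2 (hopfBarrier A y) x ![e, e] =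
      (4 * A ^ 2 * inner ℝ (x - y) e ^ 2 - 2 * A) * hopfBarrier A y x := by
  have hnorm : ∀ s : ℝ, ‖x + s • e - y‖ ^ 2 = ‖x - y‖ ^ 2 + 2 * inner ℝ (x - y) e * s + s ^ 2 := by
    intro s
    rw [add_sub_right_comm, norm_add_sq_real, inner_smul_right, norm_smul, he, mul_one,
      norm_eq_abs, sq_abs]
    ring
  rw [← deriv_deriv_comp_add_smul (contDiff_hopfBarrier A y).contDiffAt]
  simp only [hopfBarrier, hnorm]
  exact deriv_deriv_exp_neg_mul_quadratic A _ _

variable [FiniteDimensional ℝ E]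

theorem laplacian_nonneg_of_isLocalMin {u : E → ℝ} {x : E} (hmin : IsLocalMin u x)
    (hu : ContDiffAt ℝ 2 u x) : 0 ≤ Δ u x := by
  rw [laplacian_eq_iteratedFDeriv_stdOrthonormalBasis]
  refine Finset.sum_nonneg fun i _ => ?_
  set e := stdOrthonormalBasis ℝ E i
  have hline : ContinuousAt (fun s : ℝ => x + s • e) 0 := by fun_prop
  have hx : x + (0 : ℝ) • e = x := by simp
  rw [← hx] at hmin
  rw [← deriv_deriv_comp_add_smul hu]
  refine deriv_deriv_nonneg_of_isLocalMin
    (hmin.comp_continuous (g := fun s : ℝ => x + s • e) (b := 0) hline) ?_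
  exact ContinuousAt.comp (g := u) (by simpa only [hx] using hu.continuousAt) hline

theorem exists_mem_frontier_isMinOn_of_laplacian_neg {K : Set E} (hK : IsCompact K)
    (hne : K.Nonempty) {u : E → ℝ} (hu : ContinuousOn u K)
    (hu2 : ∀ x ∈ interior K, ContDiffAt ℝ 2 u x) (hlap : ∀ x ∈ interior K, Δ u x < 0) :
    ∃ x ∈ frontier K, IsMinOn u K x := by
  obtain ⟨x, hxK, hmin⟩ := hK.exists_isMinOn hne hu
  refine ⟨x, ⟨subset_closure hxK, fun hint => ?_⟩, hmin⟩
  have hloc : IsLocalMin u x := hmin.isLocalMin (mem_interior_iff_mem_nhds.1 hint)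
  exact (hlap x hint).not_ge (laplacian_nonneg_of_isLocalMin hloc (hu2 x hint))

theorem laplacian_hopfBarrier (A : ℝ) (y x : E) :
    Δ (hopfBarrier A y) x =
      (4 * A ^ 2 * ‖x - y‖ ^ 2 - 2 * A * finrank ℝ E) * hopfBarrier A y x := by
  set v := stdOrthonormalBasis ℝ E
  simp only [laplacian_eq_iteratedFDeriv_orthonormalBasis _ v,
    iteratedFDeriv_two_hopfBarrier A y x (v.norm_eq_one _)]
  rw [← Finset.sum_mul, Finset.sum_sub_distrib, ← Finset.mul_sum, v.sum_sq_inner_left]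
  simp only [Finset.sum_const, Finset.card_univ, Fintype.card_fin, nsmul_eq_mul]
  ring

theorem laplacian_hopfBarrier_pos {A : ℝ} (hA : 0 < A) {y x : E}
    (hx : finrank ℝ E < 2 * A * ‖x - y‖ ^ 2) : 0 < Δ (hopfBarrier A y) x := by
  rw [laplacian_hopfBarrier]
  exact mul_pos (by nlinarith) (exp_pos _)

theorem mul_hopfBarrier_sub_le_of_laplacian_nonpos {A r R ε : ℝ} {y z : E} {u : E → ℝ}
    (hA : 0 < A) (hr : 0 ≤ r) (hAr : finrank ℝ E < 2 * A * r ^ 2) (hε : 0 < ε)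
    (hu : ∀ x ∈ closedBall y R \ ball y r, ContDiffAt ℝ 2 u x)
    (hlap : ∀ x ∈ closedBall y R \ ball y r, Δ u x ≤ 0)
    (houter : ∀ x ∈ sphere y R, 0 ≤ u x) (hinner : ∀ x ∈ sphere y r, ε ≤ u x)
    (hz : z ∈ closedBall y R \ ball y r) :
    ε * (hopfBarrier A y z - rexp (-(A * R ^ 2))) ≤ u z := by
  set K := closedBall y R \ ball y r
  have hG : ∀ x, ContDiffAt ℝ 2 (hopfBarrier A y) x := fun x =>
    (contDiff_hopfBarrier A y).contDiffAt
  have hdiff : ∀ x ∈ K, ContDiffAt ℝ 2 (u - ε • hopfBarrier A y) x := fun x hx =>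
    (hu x hx).sub ((hG x).const_smul ε)
  have hdiff_lap : ∀ x ∈ K, Δ (u - ε • hopfBarrier A y) x < 0 := by
    intro x hx
    have hrx : r ≤ ‖x - y‖ := by simpa [dist_eq_norm] using hx.2
    have hAx : finrank ℝ E < 2 * A * ‖x - y‖ ^ 2 := hAr.trans_le (by gcongr)
    have hsmul : Δ (ε • hopfBarrier A y) x = ε * Δ (hopfBarrier A y) x := laplacian_smul ε (hG x)
    rw [(hu x hx).laplacian_sub (f₂ := ε • hopfBarrier A y) ((hG x).const_smul ε), hsmul]
    linarith [hlap x hx, mul_pos hε (laplacian_hopfBarrier_pos hA hAx)]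
  obtain ⟨x, hx, hmin⟩ := exists_mem_frontier_isMinOn_of_laplacian_neg
    ((isCompact_closedBall y R).diff isOpen_ball) ⟨z, hz⟩
    (fun x hx => (hdiff x hx).continuousAt.continuousWithinAt)
    (fun x hx => hdiff x (interior_subset hx)) (fun x hx => hdiff_lap x (interior_subset hx))
  have hbdry : -(ε * rexp (-(A * R ^ 2))) ≤ u x - ε * hopfBarrier A y x := by
    rcases frontier_closedBall_diff_ball_subset y r R hx with hxR | hxr
    · rw [hopfBarrier, mem_sphere_iff_norm.1 hxR]
      linarith [houter x hxR]
    · have hle := mul_le_mul_of_nonneg_left (hopfBarrier_le_one hA.le y x) hε.le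
      linarith [hinner x hxr, mul_pos hε (exp_pos (-(A * R ^ 2)))]
  have hxz : u x - ε * hopfBarrier A y x ≤ u z - ε * hopfBarrier A y z := hmin hz
  linarith

theorem exists_pos_forall_mul_le_of_laplacian_nonpos {y z : E} {r R : ℝ} (hr : 0 < r)
    (hz : z ∈ ball y R) :
    ∃ m > 0, ∀ (u : E → ℝ) (ε : ℝ), 0 < ε → (∀ x ∈ closedBall y R, ContDiffAt ℝ 2 u x) →
      (∀ x ∈ closedBall y R, Δ u x ≤ 0) → (∀ x ∈ closedBall y R, 0 ≤ u x) →
      (∀ x ∈ closedBall y r, ε ≤ u x) → m * ε ≤ u z := by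
  set A : ℝ := (finrank ℝ E + 1) / (2 * r ^ 2) with hA_def
  have hA : 0 < A := by positivity
  have hAr : finrank ℝ E < 2 * A * r ^ 2 := by
    have : 2 * A * r ^ 2 = finrank ℝ E + 1 := by rw [hA_def]; field_simp
    linarith
  refine ⟨hopfBarrier A y z - rexp (-(A * R ^ 2)), sub_pos.2 (exp_lt_hopfBarrier hA hz),
    fun u ε hε hu hlap hnonneg hinner => ?_⟩
  by_cases hzr : z ∈ ball y r
  · have hm_le_one : hopfBarrier A y z - rexp (-(A * R ^ 2)) ≤ 1 :=
      (sub_le_self _ (exp_nonneg _)).trans (hopfBarrier_le_one hA.le y z)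
    exact (mul_le_of_le_one_left hε.le hm_le_one).trans (hinner z (ball_subset_closedBall hzr))
  · rw [mul_comm]
    exact mul_hopfBarrier_sub_le_of_laplacian_nonpos hA hr.le hAr hε (fun x hx => hu x hx.1)
      (fun x hx => hlap x hx.1) (fun x hx => hnonneg x (sphere_subset_closedBall hx))
      (fun x hx => hinner x (sphere_subset_closedBall hx)) ⟨ball_subset_closedBall hz, hzr⟩

theorem laplacian_comp_add_right_sub {ψ : E → ℝ} {x a : E} (hx : ContDiffAt ℝ 2 ψ x)
    (hxa : ContDiffAt ℝ 2 ψ (x + a)) :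
    Δ (fun z => ψ (z + a) - ψ z) x = Δ ψ (x + a) - Δ ψ x := by
  have hshift : ContDiffAt ℝ 2 (fun z => ψ (z + a)) x :=
    ContDiffAt.comp (g := ψ) x hxa (contDiffAt_id.add contDiffAt_const)
  have hshift_lap : Δ (fun z => ψ (z + a)) x = Δ ψ (x + a) := by
    simp only [laplacian_eq_iteratedFDeriv_stdOrthonormalBasis, iteratedFDeriv_comp_add_right]
  rw [← hshift_lap]
  exact hshift.laplacian_sub hx

-- `∂ₑψ` itself need not be twice differentiable, so the minimum principle is applied to the
-- increments `ψ (· + h e) - ψ`, with a constant that survives division by `h`.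
theorem fderiv_pos_of_fderiv_center_pos {ψ : E → ℝ} {f : ℝ → ℝ} {e y z : E} {R : ℝ}
    (hψ : ContDiffOn ℝ 2 ψ (ball y R)) (hf : AntitoneOn f (ψ '' ball y R))
    (heq : ∀ x ∈ ball y R, Δ ψ x = f (ψ x)) (hmono : ∀ x ∈ ball y R, 0 ≤ fderiv ℝ ψ x e)
    (hy : 0 < fderiv ℝ ψ y e) (hz : z ∈ ball y R) : 0 < fderiv ℝ ψ z e := by
  have hsmooth : ∀ x ∈ ball y R, ContDiffAt ℝ 2 ψ x := fun x hx =>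
    hψ.contDiffAt (isOpen_ball.mem_nhds hx)
  have hdiff : ∀ x ∈ ball y R, DifferentiableAt ℝ ψ x := fun x hx =>
    (hsmooth x hx).differentiableAt (by norm_num)
  have hyR : y ∈ ball y R := mem_ball_self (pos_of_mem_ball hz)
  obtain ⟨c, hc, hcy⟩ := exists_between hy
  obtain ⟨ρ, hρ, hball⟩ := nhds_basis_ball.mem_iff.1 <| inter_mem
    ((continuousAt_fderiv_apply (hsmooth y hyR) (by norm_num) e).eventually_const_lt hcy)
    (isOpen_ball.mem_nhds hyR)
  obtain ⟨R', hzR', hR'⟩ := exists_between (mem_ball.1 hz)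
  obtain ⟨m, hm, hharnack⟩ :=
    exists_pos_forall_mul_le_of_laplacian_nonpos (half_pos hρ) (mem_ball.2 hzR')
  refine (mul_pos hm hc).trans_le (le_fderiv_of_eventually_mul_le_sub (hdiff z hz) ?_)
  filter_upwards [self_mem_nhdsWithin,
    (eventually_forall_add_smul_mem_ball y e hR').filter_mono nhdsWithin_le_nhds,
    (eventually_forall_add_smul_mem_ball y e (half_lt_self hρ)).filter_mono nhdsWithin_le_nhds]
    with h hh hshift hshift_near
  have hsub : ∀ x ∈ closedBall y R', x ∈ ball y R := fun x hx => closedBall_subset_ball hR' hx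
  have hincr : ∀ x ∈ closedBall y R', 0 ≤ ψ (x + h • e) - ψ x := fun x hx => by
    simpa only [zero_mul] using mul_le_sub_of_le_fderiv (convex_ball y R) hdiff hmono
      (le_of_lt hh) (hsub x hx) (hshift x hx)
  rw [mul_assoc]
  refine hharnack (fun x => ψ (x + h • e) - ψ x) (c * h) (mul_pos hc hh) (fun x hx => ?_)
    (fun x hx => ?_) hincr (fun x hx => ?_)
  · exact (ContDiffAt.comp (g := ψ) x (hsmooth _ (hshift x hx))
      (contDiffAt_id.add contDiffAt_const)).sub (hsmooth x (hsub x hx))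
  · rw [laplacian_comp_add_right_sub (hsmooth x (hsub x hx)) (hsmooth _ (hshift x hx)),
      heq _ (hshift x hx), heq x (hsub x hx)]
    exact sub_nonpos.2 (hf (mem_image_of_mem ψ (hsub x hx)) (mem_image_of_mem ψ (hshift x hx))
      (sub_nonneg.1 (hincr x hx)))
  · exact mul_le_sub_of_le_fderiv (convex_ball y ρ) (fun x hx => hdiff x (hball hx).2)
      (fun x hx => le_of_lt (hball hx).1) (le_of_lt hh)
      (closedBall_subset_ball (half_lt_self hρ) hx) (hshift_near x hx)

theorem fderiv_pos_of_laplacian_eq_antitone_comp {ψ : E → ℝ} {f : ℝ → ℝ} {e : E} {Ω s : Set E}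
    (hΩ : IsOpen Ω) (hs : IsPreconnected s) (hsΩ : s ⊆ Ω) (hψ : ContDiffOn ℝ 2 ψ Ω)
    (hf : AntitoneOn f (ψ '' Ω)) (heq : ∀ x ∈ Ω, Δ ψ x = f (ψ x))
    (hmono : ∀ x ∈ Ω, 0 ≤ fderiv ℝ ψ x e) (hpos : ∃ y ∈ s, 0 < fderiv ℝ ψ y e) :
    ∀ x ∈ s, 0 < fderiv ℝ ψ x e := by
  set u : Set E := {x | x ∈ Ω ∧ 0 < fderiv ℝ ψ x e}
  suffices s ⊆ u from fun x hx => (this hx).2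
  obtain ⟨y, hys, hy⟩ := hpos
  refine hs.subset_of_closure_inter_subset ?_ ⟨y, hys, hsΩ hys, hy⟩ ?_
  · refine isOpen_iff_mem_nhds.2 fun x hx => inter_mem (hΩ.mem_nhds hx.1) ?_
    have hx2 : ContDiffAt ℝ 2 ψ x := hψ.contDiffAt (hΩ.mem_nhds hx.1)
    exact (continuousAt_fderiv_apply hx2 (by norm_num) e).eventually_const_lt hx.2
  · rintro x ⟨hxu, hxs⟩
    obtain ⟨ρ, hρ, hball⟩ := Metric.isOpen_iff.1 hΩ x (hsΩ hxs)
    obtain ⟨w, hwu, hxw⟩ := Metric.mem_closure_iff.1 hxu (ρ / 2) (half_pos hρ)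
    have hsub : ball w (ρ / 2) ⊆ Ω :=
      (ball_subset_ball' (by rw [dist_comm]; linarith)).trans hball
    exact ⟨hsΩ hxs, fderiv_pos_of_fderiv_center_pos (hψ.mono hsub) (hf.mono (image_mono hsub))
      (fun x hx => heq x (hsub hx)) (fun x hx => hmono x (hsub hx)) hwu.2 hxw⟩

end StrongMinimumPrinciple

section Plane

open InnerProductSpace Laplacian

theorem fderiv_comp_equivRealProdCLM_one (φ : ℝ × ℝ → ℝ) (z : ℂ) :
    fderiv ℝ (φ ∘ Complex.equivRealProdCLM) z 1 = pd1 φ (Complex.equivRealProdCLM z) := by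
  rw [ContinuousLinearEquiv.comp_right_fderiv]
  simp [pd1]

theorem fderiv_comp_equivRealProdCLM_I (φ : ℝ × ℝ → ℝ) (z : ℂ) :
    fderiv ℝ (φ ∘ Complex.equivRealProdCLM) z Complex.I = pd2 φ (Complex.equivRealProdCLM z) := by
  rw [ContinuousLinearEquiv.comp_right_fderiv]
  simp [pd2]

theorem laplacian_comp_equivRealProdCLM {φ : ℝ × ℝ → ℝ} {z : ℂ}
    (hφ : ContDiffAt ℝ 2 φ (Complex.equivRealProdCLM z)) :
    Δ (φ ∘ Complex.equivRealProdCLM) z = lap φ (Complex.equivRealProdCLM z) := by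
  have hφ' : ContDiffAt ℝ 2 (φ ∘ Complex.equivRealProdCLM) z :=
    hφ.comp z Complex.equivRealProdCLM.contDiff.contDiffAt
  rw [laplacian_eq_iteratedFDeriv_complexPlane]
  simp only [← fderiv_fderiv_apply_eq_iteratedFDeriv hφ', fderiv_comp_equivRealProdCLM_one,
    fderiv_comp_equivRealProdCLM_I]
  exact congrArg₂ (· + ·) (fderiv_comp_equivRealProdCLM_one (pd1 φ) z)
    (fderiv_comp_equivRealProdCLM_I (pd2 φ) z)

theorem pd2_pos_of_lap_eq_antitone_comp {ψ : ℝ × ℝ → ℝ} {f : ℝ → ℝ} {Ω s : Set (ℝ × ℝ)}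
    (hΩ : IsOpen Ω) (hs : IsPreconnected s) (hsΩ : s ⊆ Ω) (hψ : ContDiffOn ℝ 2 ψ Ω)
    (hf : AntitoneOn f (ψ '' Ω)) (heq : ∀ x ∈ Ω, lap ψ x = f (ψ x))
    (hmono : ∀ x ∈ Ω, 0 ≤ pd2 ψ x) (hpos : ∃ y ∈ s, 0 < pd2 ψ y) : ∀ x ∈ s, 0 < pd2 ψ x := by
  set L := Complex.equivRealProdCLM
  have hpd2 : ∀ z, fderiv ℝ (ψ ∘ L) z Complex.I = pd2 ψ (L z) := fderiv_comp_equivRealProdCLM_I ψ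
  have hLs : IsPreconnected (L ⁻¹' s) := by
    simpa only [L.image_symm_eq_preimage] using hs.image L.symm L.symm.continuous.continuousOn
  have hf' : AntitoneOn f ((ψ ∘ L) '' (L ⁻¹' Ω)) :=
    hf.mono (image_subset_iff.2 fun z hz => mem_image_of_mem ψ hz)
  have heq' : ∀ z ∈ L ⁻¹' Ω, Δ (ψ ∘ L) z = f ((ψ ∘ L) z) := fun z hz =>
    (laplacian_comp_equivRealProdCLM (hψ.contDiffAt (hΩ.mem_nhds hz))).trans (heq _ hz)
  obtain ⟨y, hys, hy⟩ := hpos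
  intro x hx
  rw [← L.apply_symm_apply x, ← hpd2]
  refine fderiv_pos_of_laplacian_eq_antitone_comp (hΩ.preimage L.continuous) hLs
    (preimage_mono hsΩ) (hψ.comp_continuousLinearMap L.toContinuousLinearMap) hf' heq'
    (fun z hz => (hmono _ hz).trans_eq (hpd2 z).symm) ⟨L.symm y, ?_, ?_⟩ _ ?_
  · simpa using hys
  · simpa [hpd2] using hy
  · simpa using hx

variable {ψ : ℝ × ℝ → ℝ} {x₁ a b t : ℝ}

theorem hasDerivAt_verticalSlice (hψ : DifferentiableAt ℝ ψ (x₁, t)) :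
    HasDerivAt (fun s => ψ (x₁, s)) (pd2 ψ (x₁, t)) t := by
  simpa [pd2] using hasDerivAt_comp_add_smul (f := ψ) (x := (x₁, 0)) (e := (0, 1)) (t := t)
    (by simpa using hψ)

theorem continuousOn_verticalSlice_Icc {Ω : Set (ℝ × ℝ)} (hψ : ContinuousOn ψ (closure Ω))
    (hab : a < b) (hΩ : ∀ t ∈ Ioo a b, (x₁, t) ∈ Ω) :
    ContinuousOn (fun t => ψ (x₁, t)) (Icc a b) := by
  have hslice : MapsTo (fun t => (x₁, t)) (Icc a b) (closure Ω) := by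
    rw [← closure_Ioo hab.ne]
    exact MapsTo.closure hΩ (by fun_prop)
  exact hψ.comp (by fun_prop) hslice

theorem monotoneOn_verticalSlice (hψ : ContinuousOn (fun t => ψ (x₁, t)) (Icc a b))
    (hdiff : ∀ t ∈ Ioo a b, DifferentiableAt ℝ ψ (x₁, t))
    (hmono : ∀ t ∈ Ioo a b, 0 ≤ pd2 ψ (x₁, t)) :
    MonotoneOn (fun t => ψ (x₁, t)) (Icc a b) := by
  rw [← interior_Icc] at hdiff hmono
  exact monotoneOn_of_hasDerivWithinAt_nonneg (convex_Icc a b) hψ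
    (fun t ht => (hasDerivAt_verticalSlice (hdiff t ht)).hasDerivWithinAt) hmono

theorem strictMonoOn_verticalSlice (hψ : ContinuousOn (fun t => ψ (x₁, t)) (Icc a b))
    (hdiff : ∀ t ∈ Ioo a b, DifferentiableAt ℝ ψ (x₁, t))
    (hmono : ∀ t ∈ Ioo a b, 0 < pd2 ψ (x₁, t)) :
    StrictMonoOn (fun t => ψ (x₁, t)) (Icc a b) := by
  rw [← interior_Icc] at hdiff hmono
  exact strictMonoOn_of_hasDerivWithinAt_pos (convex_Icc a b) hψ
    (fun t ht => (hasDerivAt_verticalSlice (hdiff t ht)).hasDerivWithinAt) hmono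

theorem exists_pd2_pos_of_lt (hab : a < b) (hψ : ContinuousOn (fun t => ψ (x₁, t)) (Icc a b))
    (hdiff : ∀ t ∈ Ioo a b, DifferentiableAt ℝ ψ (x₁, t)) (hlt : ψ (x₁, a) < ψ (x₁, b)) :
    ∃ t ∈ Ioo a b, 0 < pd2 ψ (x₁, t) := by
  obtain ⟨t, ht, hslope⟩ := exists_hasDerivAt_eq_slope _ _ hab hψ
    fun t ht => hasDerivAt_verticalSlice (hdiff t ht)
  exact ⟨t, ht, hslope ▸ div_pos (sub_pos.2 hlt) (sub_pos.2 hab)⟩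

theorem pd2_pos_of_verticalSlice {f : ℝ → ℝ} {Ω : Set (ℝ × ℝ)} (hΩ : IsOpen Ω)
    (hψ : ContDiffOn ℝ 2 ψ Ω) (hcont : ContinuousOn ψ (closure Ω)) (hf : AntitoneOn f (ψ '' Ω))
    (heq : ∀ x ∈ Ω, lap ψ x = f (ψ x)) (hmono : ∀ x ∈ Ω, 0 ≤ pd2 ψ x) (hab : a < b)
    (hsub : ∀ t ∈ Ioo a b, (x₁, t) ∈ Ω) (hlt : ψ (x₁, a) < ψ (x₁, b)) :
    ∀ t ∈ Ioo a b, 0 < pd2 ψ (x₁, t) := by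
  have hdiff : ∀ t ∈ Ioo a b, DifferentiableAt ℝ ψ (x₁, t) := fun t ht =>
    (hψ.contDiffAt (hΩ.mem_nhds (hsub t ht))).differentiableAt two_ne_zero
  obtain ⟨t₀, ht₀, hpos⟩ :=
    exists_pd2_pos_of_lt hab (continuousOn_verticalSlice_Icc hcont hab hsub) hdiff hlt
  have hconn : IsPreconnected ((fun t => (x₁, t)) '' Ioo a b) :=
    isPreconnected_Ioo.image _ (by fun_prop)
  exact fun t ht => pd2_pos_of_lap_eq_antitone_comp hΩ hconn (image_subset_iff.2 hsub) hψ hf heq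
    hmono ⟨_, mem_image_of_mem _ ht₀, hpos⟩ _ (mem_image_of_mem _ ht)

end Plane

theorem strictMonoOn_three_mul_sq_sub_two_mul_cube :
    StrictMonoOn (fun t : ℝ => 3 * t ^ 2 - 2 * t ^ 3) (Icc 0 1) := by
  have hderiv : ∀ t : ℝ, HasDerivAt (fun t : ℝ => 3 * t ^ 2 - 2 * t ^ 3) (6 * t * (1 - t)) t :=
    fun t => (((hasDerivAt_pow 2 t).const_mul 3).fun_sub
      ((hasDerivAt_pow 3 t).const_mul 2)).congr_deriv (by norm_num; ring)
  refine strictMonoOn_of_hasDerivWithinAt_pos (convex_Icc 0 1) (by fun_prop)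
    (fun t _ => (hderiv t).hasDerivWithinAt) fun t ht => ?_
  rw [interior_Icc] at ht
  exact mul_pos (by linarith [ht.1]) (sub_pos.2 ht.2)

theorem antitoneOn_of_leftInvOn_cubic {Q : ℝ} (hQ : 0 < Q) {κ f : ℝ → ℝ}
    (hκ : ∀ t ∈ Icc (0 : ℝ) 1, κ (Q * (3 * t ^ 2 - 2 * t ^ 3)) = t)
    (hf : ∀ s : ℝ, f s = 6 * Q * (1 - 2 * κ s)) : AntitoneOn f (Icc 0 Q) := by
  set φ : ℝ → ℝ := fun t => Q * (3 * t ^ 2 - 2 * t ^ 3)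
  have hφ : StrictMonoOn φ (Icc 0 1) := fun s hs t ht hst =>
    mul_lt_mul_of_pos_left (strictMonoOn_three_mul_sq_sub_two_mul_cube hs ht hst) hQ
  have hsurj : SurjOn φ (Icc 0 1) (Icc 0 Q) := by
    have hφ_cont : ContinuousOn φ (Icc 0 1) := by fun_prop
    have hivt := hφ_cont.surjOn_Icc (left_mem_Icc.2 zero_le_one) (right_mem_Icc.2 zero_le_one)
    have h0 : φ 0 = 0 := by simp [φ]
    have h1 : φ 1 = Q := by norm_num [φ]
    rwa [h0, h1] at hivt
  intro p hp q hq hpq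
  obtain ⟨s, hs, rfl⟩ := hsurj hp
  obtain ⟨t, ht, rfl⟩ := hsurj hq
  have hst : s ≤ t := (hφ.le_iff_le hs ht).1 hpq
  rw [hf, hf, hκ s hs, hκ t ht]
  gcongr

theorem stmt18_general {Q : ℝ} (hQ : 0 < Q) {f h₀ h₁ : ℝ → ℝ} (hf : AntitoneOn f (Icc 0 Q))
    (hh₀ : Continuous h₀) (hh₁ : Continuous h₁) {Ω : Set (ℝ × ℝ)}
    (hΩ : Ω = {x : ℝ × ℝ | h₀ x.1 < x.2 ∧ x.2 < h₁ x.1}) {ψ : ℝ × ℝ → ℝ}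
    (hC2 : ContDiffOn ℝ 2 ψ Ω) (hcont : ContinuousOn ψ (closure Ω))
    (heq : ∀ x ∈ Ω, lap ψ x = f (ψ x)) (hΓ₀ : ∀ x₁ : ℝ, ψ (x₁, h₀ x₁) = 0)
    (hΓ₁ : ∀ x₁ : ℝ, ψ (x₁, h₁ x₁) = Q) (hmono : ∀ x ∈ Ω, 0 ≤ pd2 ψ x) :
    ∀ x ∈ Ω, (0 < ψ x ∧ ψ x < Q) ∧ 0 < pd2 ψ x := by
  have hopen : IsOpen Ω := hΩ ▸
    (isOpen_lt (by fun_prop) continuous_snd).inter (isOpen_lt continuous_snd (by fun_prop))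
  have hmem : ∀ x₁, ∀ t ∈ Ioo (h₀ x₁) (h₁ x₁), (x₁, t) ∈ Ω := fun x₁ t ht => hΩ ▸ ht
  have hdiff : ∀ x₁, ∀ t ∈ Ioo (h₀ x₁) (h₁ x₁), DifferentiableAt ℝ ψ (x₁, t) := fun x₁ t ht =>
    (hC2.contDiffAt (hopen.mem_nhds (hmem x₁ t ht))).differentiableAt two_ne_zero
  have hslice : ∀ x₁, h₀ x₁ < h₁ x₁ → ContinuousOn (fun t => ψ (x₁, t)) (Icc (h₀ x₁) (h₁ x₁)) :=
    fun x₁ hlt => continuousOn_verticalSlice_Icc hcont hlt (hmem x₁)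
  have hrange : ψ '' Ω ⊆ Icc 0 Q := by
    rintro _ ⟨⟨x₁, x₂⟩, hx, rfl⟩
    obtain ⟨h0, h1⟩ : x₂ ∈ Ioo (h₀ x₁) (h₁ x₁) := by rwa [hΩ] at hx
    rw [← hΓ₀ x₁, ← hΓ₁ x₁]
    exact (monotoneOn_verticalSlice (hslice x₁ (h0.trans h1)) (hdiff x₁)
      fun t ht => hmono _ (hmem x₁ t ht)).mapsTo_Icc ⟨h0.le, h1.le⟩
  rintro ⟨x₁, x₂⟩ hx
  obtain ⟨h0, h1⟩ : x₂ ∈ Ioo (h₀ x₁) (h₁ x₁) := by rwa [hΩ] at hx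
  have hpos : ∀ t ∈ Ioo (h₀ x₁) (h₁ x₁), 0 < pd2 ψ (x₁, t) :=
    pd2_pos_of_verticalSlice hopen hC2 hcont (hf.mono hrange) heq hmono (h0.trans h1) (hmem x₁)
      (by rwa [hΓ₀, hΓ₁])
  have hstrict := strictMonoOn_verticalSlice (hslice x₁ (h0.trans h1)) (hdiff x₁) hpos
  have hbetween : ψ (x₁, x₂) ∈ Ioo (ψ (x₁, h₀ x₁)) (ψ (x₁, h₁ x₁)) := hstrict.mapsTo_Ioo ⟨h0, h1⟩
  rw [hΓ₀, hΓ₁] at hbetween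
  exact ⟨hbetween, hpos x₂ ⟨h0, h1⟩⟩

/-- Positivity: a monotone solution of `Δψ = f(ψ)` in the nozzle with `ψ = 0` on `Γ₀`
and `ψ = Q` on `Γ₁` satisfies `0 < ψ < Q` and `∂_{x₂}ψ > 0` in `Ω`. -/
theorem stmt18
    (Q α : ℝ) (hQ : 0 < Q) (hα : α ∈ Set.Ioo (0 : ℝ) 1)
    (κ : ℝ → ℝ) (hκ : ∀ t ∈ Set.Icc (0 : ℝ) 1, κ (Q * (3 * t ^ 2 - 2 * t ^ 3)) = t)
    (f : ℝ → ℝ) (hf : ∀ s : ℝ, f s = 6 * Q * (1 - 2 * κ s))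
    (h₀ h₁ : ℝ → ℝ)
    (hh₀ : ContDiff ℝ 2 h₀) (hh₁ : ContDiff ℝ 2 h₁)
    (hh₀α : ∃ C : ℝ, ∀ x y : ℝ, |deriv (deriv h₀) x - deriv (deriv h₀) y| ≤ C * |x - y| ^ α)
    (hh₁α : ∃ C : ℝ, ∀ x y : ℝ, |deriv (deriv h₁) x - deriv (deriv h₁) y| ≤ C * |x - y| ^ α)
    (hlt : ∀ x₁ : ℝ, h₀ x₁ < h₁ x₁)
    (Lm Lp a b : ℝ) (hLm : Lm < 0) (hLp : 0 < Lp)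
    (ha : 0 ≤ a) (hab : a < b) (hb : b ≤ 1)
    (hup : ∀ x₁ ≤ Lm, h₀ x₁ = 0 ∧ h₁ x₁ = 1)
    (hdown : ∀ x₁ ≥ Lp, h₀ x₁ = a ∧ h₁ x₁ = b)
    (Ω : Set (ℝ × ℝ)) (hΩ : Ω = {x : ℝ × ℝ | h₀ x.1 < x.2 ∧ x.2 < h₁ x.1})
    (ψ : ℝ × ℝ → ℝ)
    (hC2 : ContDiffOn ℝ 2 ψ Ω)
    (hLip : ∃ K, LipschitzOnWith K ψ (closure Ω))
    (hbd : ∀ x ∈ Ω, 0 ≤ ψ x ∧ ψ x ≤ Q)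
    (heq : ∀ x ∈ Ω, lap ψ x = f (ψ x))
    (hΓ₀ : ∀ x₁ : ℝ, ψ (x₁, h₀ x₁) = 0)
    (hΓ₁ : ∀ x₁ : ℝ, ψ (x₁, h₁ x₁) = Q)
    (hmono : ∀ x ∈ Ω, 0 ≤ pd2 ψ x) :
    ∀ x ∈ Ω, (0 < ψ x ∧ ψ x < Q) ∧ 0 < pd2 ψ x := by
  obtain ⟨_, hK⟩ := hLip
  exact stmt18_general hQ (antitoneOn_of_leftInvOn_cubic hQ hκ hf) hh₀.continuous hh₁.continuous hΩ
    hC2 hK.continuousOn heq hΓ₀ hΓ₁ hmono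
end
end
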